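/- (Atkin, modulus powers of 11) For every positive integer k and every natural number n, if 24n ≡ 1 (mod 11^k) then p(n) ≡ 0 (mod 11^k). -/

import Mathlib

/-!
Let `N` be given by `24 N + 1 = 11 ^ (2 k)`. Since `Δ = q E ^ 24` with `E = ∏ (1 - qⁿ)`, and
`(∑ p(n) qⁿ) E = 1`, we have `Δ ^ N = q ^ N (∑ p(n) qⁿ) E ^ (11 ^ (2 k))`. Modulo `11 ^ k` the last
factor is a unit power series in `q ^ (11 ^ k)` (`pow_congr`). Let `U` be the operator
`∑ a(n) qⁿ ↦ ∑ a(11 n) qⁿ`. If `U ^ k (Δ ^ N) ≡ 0` modulo `11 ^ k`, then `p(n)` is divisible by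
`11 ^ k` whenever `11 ^ k` divides `n + N`, that is, whenever `24 n ≡ 1` (`partition_congr`). Modulo
`11 ^ k` the operator `U` is the Hecke operator `T₁₁` in weight `w = 12 N`, because they differ by a
multiple of `11 ^ (w - 1)` and `w > k`. So the theorem is a statement about the Hecke operator on level
one forms, `U ^ k (Δ ^ N) ≡ 0`, which is `del_congr`.

Level one forms with rational coefficients are the isobaric polynomials in `E₄` and `E₆`
(`hom_of_isMF`), and divisibility is measured on the coefficients of these polynomials. The form
`11 T₁₁ f` is the sum of the twelve conjugates of `f`, which are `11 ^ w f(11 τ)` and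
`f((τ + l) / 11)`. The conjugates of `E₄` and those of `E₆` are the roots of explicit polynomials of
degree twelve over `ℤ[E₄, E₆]`. These satisfy Newton's identities, which by Sturm's bound need only be
verified on finitely many `q`-coefficients (`newton_check4`, `newton_check6`, `conj_root`). The Newton
polygons of the two polynomials show that the conjugates of `E₄` and `E₆`, divided by `11 ^ (5/12)` and
`11 ^ (6/12)`, are integral over `ℤ[11 ^ (-11/12) E₄, E₆]`, and divided by `11 ^ (4/12)` and
`11 ^ (7/12)`, over `ℤ[E₄, 11 ^ (-11/12) E₆]` (`conj_integral_a`, `conj_integral_b`). Write `W α r` for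
the polynomials whose coefficient at `X ^ m` has `11`-adic valuation at least `(r - α · m) / 12`. Then
the trace carries `W (5, 6) r` to `W (11, 0) r` and `W (4, 7) r` to `W (0, 11) r` (`W_trace`).

The iterates of `T₁₁` on `Δ ^ N` are `Δ ^ e G`, where `e` runs through the descending sequence `ex` and
`G` is a cusp form of weight `10 K`, a combination of the monomials `E₄ ^ (K + 3 d) E₆ ^ (K - 2 d)`. The
lattice `Lat K n` asks that the coefficient indexed by `d` be divisible by `11 ^ (n + max |d| 1)`. The
first slope condition above controls `d < 0` and the second one `d > 0`; the coefficient with `d = 0`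
is determined by the others because `G` vanishes at infinity (`lat_of_W`). Each step of the descent
takes `Lat K n` to `Lat K' (n + 1)` (`step_aux`), so after `k` steps all coefficients are divisible by
`11 ^ k`.
-/

set_option linter.unusedSectionVars false

/-- `p n` is the number of partitions of `n`. -/
def partitionCount (n : ℕ) : ℕ := Fintype.card (Nat.Partition n)

/-! ### The Hecke operator of index 11 on level one forms -/

namespace Atkin

noncomputable section

open scoped MatrixGroups ModularForm Manifold Real
open UpperHalfPlane ModularForm ModularFormClass EisensteinSeries

/-- The matrix `(1 l; 0 11)`, which acts as `τ ↦ (τ + l) / 11`. -/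
def matUp (l : ℤ) : GL (Fin 2) ℝ :=
  Matrix.GeneralLinearGroup.mkOfDetNeZero !![1, (l : ℝ); 0, 11] (by simp [Matrix.det_fin_two])

/-- The matrix `(11 0; 0 1)`, which acts as `τ ↦ 11 τ`. -/
def matInf : GL (Fin 2) ℝ :=
  Matrix.GeneralLinearGroup.mkOfDetNeZero !![11, 0; 0, 1] (by simp [Matrix.det_fin_two])

/-- The mechanism behind the invariance of Hecke operators: right multiplication by `g` permutes the
cosets of `SL(2, ℤ)`, and `f` only sees the coset. -/
lemma slash_swap {k : ℤ} (f : ModularForm 𝒮ℒ k) (A B : GL (Fin 2) ℝ) (g γ : SL(2, ℤ))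
    (h : A.val * g.val.map (Int.cast : ℤ → ℝ) = γ.val.map (Int.cast : ℤ → ℝ) * B.val) :
    ((f : ℍ → ℂ) ∣[k] A) ∣[k] g = (f : ℍ → ℂ) ∣[k] B := by
  have h' : A * (g : GL (Fin 2) ℝ) = (γ : GL (Fin 2) ℝ) * B := Units.ext (by simpa using! h)
  rw [SL_slash, ← SlashAction.slash_mul, h', SlashAction.slash_mul]
  congr 1
  exact SlashInvariantFormClass.slash_action_eq f _ ⟨γ, rfl⟩

lemma slash_up_T {k : ℤ} (f : ModularForm 𝒮ℒ k) (l : ℤ) :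
    ((f : ℍ → ℂ) ∣[k] matUp l) ∣[k] ModularGroup.T = (f : ℍ → ℂ) ∣[k] matUp (l + 1) := by
  apply slash_swap f _ _ _ 1
  ext i j; fin_cases i <;> fin_cases j <;>
    simp [matUp, Matrix.mul_apply, Fin.sum_univ_two, ModularGroup.T]
  ring

lemma slash_up_add {k : ℤ} (f : ModularForm 𝒮ℒ k) (l : ℤ) :
    (f : ℍ → ℂ) ∣[k] matUp (l + 11) = (f : ℍ → ℂ) ∣[k] matUp l := by
  have := slash_swap f (matUp (l + 11)) (matUp l) 1 ModularGroup.T (by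
    ext i j; fin_cases i <;> fin_cases j <;>
      simp [matUp, Matrix.mul_apply, Fin.sum_univ_two, ModularGroup.T])
  simpa using this

lemma slash_inf_T {k : ℤ} (f : ModularForm 𝒮ℒ k) :
    ((f : ℍ → ℂ) ∣[k] matInf) ∣[k] ModularGroup.T = (f : ℍ → ℂ) ∣[k] matInf := by
  apply slash_swap f _ _ _ ⟨!![1, 11; 0, 1], by simp⟩
  ext i j; fin_cases i <;> fin_cases j <;>
    simp [matInf, Matrix.mul_apply, Fin.sum_univ_two, ModularGroup.T]

lemma slash_inf_S {k : ℤ} (f : ModularForm 𝒮ℒ k) :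
    ((f : ℍ → ℂ) ∣[k] matInf) ∣[k] ModularGroup.S = (f : ℍ → ℂ) ∣[k] matUp 0 := by
  apply slash_swap f _ _ _ ModularGroup.S
  ext i j; fin_cases i <;> fin_cases j <;>
    simp [matInf, matUp, Matrix.mul_apply, Fin.sum_univ_two, ModularGroup.S]

lemma slash_up_zero_S {k : ℤ} (f : ModularForm 𝒮ℒ k) :
    ((f : ℍ → ℂ) ∣[k] matUp 0) ∣[k] ModularGroup.S = (f : ℍ → ℂ) ∣[k] matInf := by
  apply slash_swap f _ _ _ ModularGroup.S
  ext i j; fin_cases i <;> fin_cases j <;>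
    simp [matInf, matUp, Matrix.mul_apply, Fin.sum_univ_two, ModularGroup.S]

/-- `S` carries the coset of `l ≠ 0` to the one of `l' = -1 / l` modulo `11`. -/
lemma slash_up_S {k : ℤ} (f : ModularForm 𝒮ℒ k) (l l' x : ℤ) (h : l * l' + 11 * x = -1) :
    ((f : ℍ → ℂ) ∣[k] matUp l) ∣[k] ModularGroup.S = (f : ℍ → ℂ) ∣[k] matUp l' := by
  apply slash_swap f _ _ _ ⟨!![l, x; 11, -l'], by simp [Matrix.det_fin_two]; linarith⟩
  have hr : (l : ℝ) * l' + 11 * x = -1 := by exact_mod_cast h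
  ext i j; fin_cases i <;> fin_cases j <;>
    simp [matUp, Matrix.mul_apply, Fin.sum_univ_two, ModularGroup.S]
  · linarith
  · ring

/-- The Hecke operator `T₁₁`: the sum of the slashes of `f` over the twelve cosets of `SL(2, ℤ)` in the
integral matrices of determinant `11`. The normalization `det ^ (k - 1)` is part of the slash action. -/
def heckeFun (k : ℤ) (f : ℍ → ℂ) : ℍ → ℂ :=
  (∑ l ∈ Finset.range 11, f ∣[k] matUp (l : ℤ)) + f ∣[k] matInf

lemma heckeFun_T {k : ℤ} (f : ModularForm 𝒮ℒ k) :
    heckeFun k f ∣[k] ModularGroup.T = heckeFun k f := by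
  have h0 := slash_up_add f 0
  simp only [heckeFun, Finset.sum_range_succ, Finset.sum_range_zero, SlashAction.add_slash,
    slash_up_T, slash_inf_T, zero_add] at *
  norm_num at *
  rw [h0]
  abel

lemma heckeFun_S {k : ℤ} (f : ModularForm 𝒮ℒ k) :
    heckeFun k f ∣[k] ModularGroup.S = heckeFun k f := by
  simp only [heckeFun, Finset.sum_range_succ, Finset.sum_range_zero, SlashAction.add_slash,
    slash_inf_S, zero_add, Nat.cast_zero, slash_up_zero_S]
  rw [slash_up_S f _ 10 (-1) (by norm_num), slash_up_S f _ 5 (-1) (by norm_num),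
    slash_up_S f _ 7 (-2) (by norm_num), slash_up_S f _ 8 (-3) (by norm_num),
    slash_up_S f _ 2 (-1) (by norm_num), slash_up_S f _ 9 (-5) (by norm_num),
    slash_up_S f _ 3 (-2) (by norm_num), slash_up_S f _ 4 (-3) (by norm_num),
    slash_up_S f _ 6 (-5) (by norm_num), slash_up_S f _ 1 (-1) (by norm_num)]
  norm_num
  abel

/-- The Hecke operator `T₁₁` as a map from level one modular forms to level one modular forms. -/
def heckeForm {k : ℤ} (f : ModularForm 𝒮ℒ k) : ModularForm 𝒮ℒ k where
  toFun := heckeFun k f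
  slash_action_eq' := by
    rintro _ ⟨γ, rfl⟩
    exact SlashInvariantForm.slash_action_generators_SL2Z (heckeFun_S f) (heckeFun_T f) γ
  holo' := by
    have h := f.holo'
    refine MDifferentiable.add ?_ (h.slash k _)
    exact MDifferentiable.sum fun l _ => h.slash k _
  bdd_at_cusps' {c} hc := by
    rw [OnePoint.isBoundedAt_iff_forall_SL2Z hc]
    intro γ _
    have : heckeFun k f ∣[k] γ = heckeFun k f :=
      SlashInvariantForm.slash_action_generators_SL2Z (heckeFun_S f) (heckeFun_T f) γ
    rw [this]
    have hb : IsBoundedAtImInfty (f : ℍ → ℂ) := ModularFormClass.bdd_at_infty f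
    refine Filter.BoundedAtFilter.add ?_ (hb.slash k (by simp [matInf]))
    refine Finset.sum_induction _ (fun g : ℍ → ℂ => IsBoundedAtImInfty g)
      (fun a b ha hb => Filter.BoundedAtFilter.add ha hb) ?_ ?_
    · exact Filter.const_boundedAtFilter _ 0
    · intro l _
      exact hb.slash k (by simp [matUp])

end
end Atkin

namespace Atkin

noncomputable section

open scoped MatrixGroups ModularForm Manifold Real
open UpperHalfPlane ModularForm ModularFormClass EisensteinSeries

lemma slash_up_apply {k : ℤ} (f : ℍ → ℂ) (l : ℤ) (τ : ℍ) :
    ∃ τ' : ℍ, (τ' : ℂ) = (τ + l) / 11 ∧ (f ∣[k] matUp l) τ = 11⁻¹ * f τ' := by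
  have hd : (0:ℝ) < (matUp l).det.val := by simp [matUp, Matrix.det_fin_two]
  refine ⟨matUp l • τ, ?_, ?_⟩
  · rw [UpperHalfPlane.coe_smul_of_det_pos hd]
    simp [num, denom, matUp]
  · rw [slash_apply]
    have h2 : denom (matUp l) τ = 11 := by simp [denom, matUp]
    have h3 : (matUp l).det.val = 11 := by simp [matUp, Matrix.det_fin_two]
    rw [h2, h3]
    simp only [UpperHalfPlane.σ, h3]
    norm_num
    rw [mul_assoc, ← zpow_neg, ← zpow_add₀ (by norm_num), mul_comm]
    congr 1
    rw [show k - 1 + -k = -1 by ring]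
    norm_num

lemma slash_inf_apply {k : ℤ} (f : ℍ → ℂ) (τ : ℍ) :
    ∃ τ' : ℍ, (τ' : ℂ) = 11 * τ ∧ (f ∣[k] matInf) τ = 11 ^ (k - 1) * f τ' := by
  have hd : (0:ℝ) < (matInf).det.val := by simp [matInf, Matrix.det_fin_two]
  refine ⟨matInf • τ, ?_, ?_⟩
  · rw [UpperHalfPlane.coe_smul_of_det_pos hd]
    simp [num, denom, matInf]
  · rw [slash_apply]
    have h2 : denom matInf τ = 1 := by simp [denom, matInf]
    have h3 : (matInf).det.val = 11 := by simp [matInf, Matrix.det_fin_two]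
    rw [h2, h3]
    simp only [UpperHalfPlane.σ, h3]
    norm_num
    rw [mul_comm]

lemma sum_root_pow (ζ : ℂ) (h : IsPrimitiveRoot ζ 11) (m : ℕ) :
    ∑ l ∈ Finset.range 11, (ζ ^ l) ^ m = if 11 ∣ m then 11 else 0 := by
  simp_rw [← pow_mul, mul_comm _ m, pow_mul]
  split_ifs with hm
  · rw [(h.pow_eq_one_iff_dvd m).2 hm]; simp
  · have h1 : ζ ^ m ≠ 1 := fun hh => hm ((h.pow_eq_one_iff_dvd m).1 hh)
    have h2 := mul_neg_geom_sum (ζ ^ m) 11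
    rw [← pow_mul, mul_comm m, pow_mul, h.pow_eq_one, one_pow, sub_self] at h2
    exact (mul_eq_zero.1 h2).resolve_left (sub_ne_zero.2 (Ne.symm h1))

/-- The coefficients of `T₁₁ f` are `a(11 n) + 11 ^ (k - 1) a(n / 11)`: summing over `l` the values at
`(τ + l) / 11` kills every exponent not divisible by `11`. -/
lemma heckeForm_qExpansion {k : ℤ} (f : ModularForm 𝒮ℒ k) (n : ℕ) :
    (qExpansion 1 (heckeForm f)).coeff n = (qExpansion 1 f).coeff (11 * n) +
      11 ^ (k - 1) * (if 11 ∣ n then (qExpansion 1 f).coeff (n / 11) else 0) := by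
  symm
  refine ModularFormClass.qExpansion_coeff_unique (c := fun n => (qExpansion 1 f).coeff (11 * n) +
      11 ^ (k - 1) * (if 11 ∣ n then (qExpansion 1 f).coeff (n / 11) else 0))
      one_pos one_mem_strictPeriods_SL (fun τ => ?_) n
  have hf := fun τ => hasSum_qExpansion (h := 1) f one_pos one_mem_strictPeriods_SL τ
  have inj : Function.Injective (fun n : ℕ => 11 * n) := fun a b h => by simpa using h
  have key : HasSum (fun m => (qExpansion 1 f).coeff (11 * m) * Function.Periodic.qParam 1 τ ^ m)
      ((∑ l ∈ Finset.range 11, (f : ℍ → ℂ) ∣[k] matUp (l : ℤ)) τ) := by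
    set ζ : ℂ := Complex.exp (2 * π * Complex.I / (11 : ℕ)) with hζ
    have hprim : IsPrimitiveRoot ζ 11 := Complex.isPrimitiveRoot_exp 11 (by norm_num)
    set r : ℂ := Complex.exp (2 * π * Complex.I * τ / 11) with hr
    have h1 : ∀ l ∈ Finset.range 11, HasSum
        (fun m => 11⁻¹ * ((qExpansion 1 f).coeff m * (ζ ^ l * r) ^ m))
        (((f : ℍ → ℂ) ∣[k] matUp (l : ℤ)) τ) := by
      intro l _
      obtain ⟨τ', h1, h2⟩ := slash_up_apply (k := k) f l τ
      rw [h2]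
      have h3 : Function.Periodic.qParam 1 τ' = ζ ^ l * r := by
        rw [Function.Periodic.qParam, h1, hζ, hr, ← Complex.exp_nat_mul, ← Complex.exp_add]
        congr 1
        push_cast
        ring
      have := (hf τ').mul_left (11⁻¹ : ℂ)
      rwa [h3] at this
    have h2 := hasSum_sum h1
    rw [Finset.sum_apply]
    have h3 : Function.Periodic.qParam 1 τ = r ^ 11 := by
      rw [Function.Periodic.qParam, hr, ← Complex.exp_nat_mul]
      congr 1
      push_cast
      ring
    rw [← inj.hasSum_iff] at h2
    · convert h2 using 2 with m
      have : ∑ i ∈ Finset.range 11, 11⁻¹ * ((qExpansion 1 f).coeff (11 * m) *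
          (ζ ^ i * r) ^ (11 * m)) = 11⁻¹ * (qExpansion 1 f).coeff (11 * m) * r ^ (11 * m) *
          ∑ i ∈ Finset.range 11, (ζ ^ i) ^ (11 * m) := by
        rw [Finset.mul_sum]
        exact Finset.sum_congr rfl fun i _ => by rw [mul_pow]; ring
      simp only [Function.comp]
      rw [this, sum_root_pow ζ hprim, if_pos (dvd_mul_right _ _), h3, pow_mul]
      ring
    · intro m hm
      have hm' : ¬ 11 ∣ m := fun ⟨c, hc⟩ => hm ⟨c, hc.symm⟩
      have : ∑ i ∈ Finset.range 11, 11⁻¹ * ((qExpansion 1 f).coeff m *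
          (ζ ^ i * r) ^ m) = 11⁻¹ * (qExpansion 1 f).coeff m * r ^ m *
          ∑ i ∈ Finset.range 11, (ζ ^ i) ^ m := by
        rw [Finset.mul_sum]
        exact Finset.sum_congr rfl fun i _ => by rw [mul_pow]; ring
      rw [this, sum_root_pow ζ hprim, if_neg hm', mul_zero]
  have key2 : HasSum (fun m => 11 ^ (k - 1) *
      (if 11 ∣ m then (qExpansion 1 f).coeff (m / 11) else 0) * Function.Periodic.qParam 1 τ ^ m)
      (((f : ℍ → ℂ) ∣[k] matInf) τ) := by
    obtain ⟨τ', h1, h2⟩ := slash_inf_apply (k := k) f τ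
    rw [h2, ← inj.hasSum_iff]
    · have := (hf τ').mul_left (11 ^ (k - 1) : ℂ)
      have h3 : Function.Periodic.qParam 1 τ' = Function.Periodic.qParam 1 τ ^ 11 := by
        rw [Function.Periodic.qParam, Function.Periodic.qParam, h1, ← Complex.exp_nat_mul]
        congr 1
        push_cast
        ring
      convert! this using 1
      funext m
      simp only [Function.comp, h3, dvd_mul_right, if_true, Nat.mul_div_cancel_left m (show 0 < 11 by norm_num), pow_mul, mul_assoc]
    · intro m hm
      have hm' : ¬ 11 ∣ m := fun ⟨c, hc⟩ => hm ⟨c, hc.symm⟩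
      simp [hm']
  have := key.add key2
  simp only [smul_eq_mul, add_mul]
  exact this

end
end Atkin

/-! ### Polynomials in the Eisenstein series of weights 4 and 6 -/

namespace Atkin

noncomputable section

/-- The `q`-expansion of the Eisenstein series `E₄`, with integral coefficients. -/
def e4Z : PowerSeries ℤ :=
  PowerSeries.mk fun n => if n = 0 then 1 else 240 * (ArithmeticFunction.sigma 3 n : ℤ)

/-- The `q`-expansion of the Eisenstein series `E₆`, with integral coefficients. -/
def e6Z : PowerSeries ℤ :=
  PowerSeries.mk fun n => if n = 0 then 1 else -504 * (ArithmeticFunction.sigma 5 n : ℤ)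

/-- The `q`-expansion of `E₄` over a commutative ring. -/
def e4 (K : Type*) [CommRing K] : PowerSeries K := PowerSeries.map (Int.castRingHom K) e4Z

/-- The `q`-expansion of `E₆` over a commutative ring. -/
def e6 (K : Type*) [CommRing K] : PowerSeries K := PowerSeries.map (Int.castRingHom K) e6Z

/-- The evaluation `X 0 ↦ E₄`, `X 1 ↦ E₆` of polynomials at `q`-expansions. Level one modular forms
are represented throughout by the polynomials in `E₄` and `E₆` that give them. -/
def ev (K : Type*) [CommRing K] : MvPolynomial (Fin 2) K →ₐ[K] PowerSeries K :=
  MvPolynomial.aeval ![e4 K, e6 K]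

/-- The weights of the variables: `X 0` stands for `E₄` and `X 1` for `E₆`. -/
def wt : Fin 2 → ℕ := ![4, 6]

/-- `P` is isobaric of weight `w`, so that it represents a modular form of weight `w`. -/
abbrev Hom {K : Type*} [CommRing K] (P : MvPolynomial (Fin 2) K) (w : ℕ) : Prop :=
  MvPolynomial.IsWeightedHomogeneous wt P w

/-- The polynomial `X 0 ^ 3 - X 1 ^ 2`, which represents `1728 Δ`. -/
def del (K : Type*) [CommRing K] : MvPolynomial (Fin 2) K :=
  MvPolynomial.X 0 ^ 3 - MvPolynomial.X 1 ^ 2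

section
variable {R : Type*} [CommRing R]

/-- The operator `∑ a(n) qⁿ ↦ ∑ a(11 n) qⁿ`. -/
def U : PowerSeries R →ₗ[R] PowerSeries R where
  toFun φ := PowerSeries.mk fun n => PowerSeries.coeff (11 * n) φ
  map_add' φ ψ := by ext; simp
  map_smul' c φ := by ext; simp

@[simp] lemma coeff_U (φ : PowerSeries R) (n : ℕ) :
    PowerSeries.coeff n (U φ) = PowerSeries.coeff (11 * n) φ := by simp [U]

/-- The operator `∑ a(n) qⁿ ↦ ∑ a(n) q¹¹ⁿ`. -/
abbrev V : PowerSeries R →ₐ[R] PowerSeries R := PowerSeries.expand 11 (by norm_num)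

/-- Eleven times the Hecke operator of index `11` in weight `k`, on `q`-expansions. -/
def Tr (k : ℕ) (φ : PowerSeries R) : PowerSeries R := (11 : R) • U φ + (11 ^ k : R) • V φ

lemma coeff_Tr (k : ℕ) (φ : PowerSeries R) (n : ℕ) : PowerSeries.coeff n (Tr k φ) =
    11 * PowerSeries.coeff (11 * n) φ +
      11 ^ k * if 11 ∣ n then PowerSeries.coeff (n / 11) φ else 0 := by
  simp [Tr, PowerSeries.coeff_expand]

end

section
variable {K : Type*} [Field K] [CharZero K]
open MvPolynomial

lemma hom_X0 : Hom (X 0 : MvPolynomial (Fin 2) K) 4 := isWeightedHomogeneous_X K wt 0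
lemma hom_X1 : Hom (X 1 : MvPolynomial (Fin 2) K) 6 := isWeightedHomogeneous_X K wt 1
lemma hom_one : Hom (1 : MvPolynomial (Fin 2) K) 0 := isWeightedHomogeneous_one K wt

lemma hom_pow {P : MvPolynomial (Fin 2) K} {w : ℕ} (h : Hom P w) (n : ℕ) : Hom (P ^ n) (n * w) := by
  simpa using h.pow n

lemma hom_mul' {P Q : MvPolynomial (Fin 2) K} {a b w : ℕ} (hP : Hom P a) (hQ : Hom Q b)
    (h : a + b = w) : Hom (P * Q) w := h ▸ hP.mul hQ

lemma hom_sub {P Q : MvPolynomial (Fin 2) K} {w : ℕ} (hP : Hom P w) (hQ : Hom Q w) :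
    Hom (P - Q) w := (weightedHomogeneousSubmodule K wt w).sub_mem hP hQ

lemma hom_C_mul {P : MvPolynomial (Fin 2) K} {w : ℕ} (c : K) (hP : Hom P w) :
    Hom (C c * P) w := by
  have := (weightedHomogeneousSubmodule K wt w).smul_mem c hP
  rwa [smul_eq_C_mul] at this

lemma hom_del : Hom (del K) 12 := by
  exact hom_sub (hom_pow hom_X0 3) (hom_pow hom_X1 2)

lemma constCoeff_ev (P : MvPolynomial (Fin 2) K) :
    PowerSeries.coeff 0 (ev K P) = eval (fun _ => 1) P := by
  induction P using MvPolynomial.induction_on with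
  | C a => simp [ev]
  | add p q hp hq => rw [map_add, map_add, map_add, hp, hq]
  | mul_X p i hp =>
    rw [map_mul, PowerSeries.coeff_zero_eq_constantCoeff_apply, map_mul,
      ← PowerSeries.coeff_zero_eq_constantCoeff_apply, hp, map_mul, eval_X]
    congr 1
    rw [← PowerSeries.coeff_zero_eq_constantCoeff_apply]
    fin_cases i <;> simp [ev, e4, e6, e4Z, e6Z, -PowerSeries.coeff_zero_eq_constantCoeff]

lemma ev_X0 : ev K (X 0) = e4 K := by simp [ev]
lemma ev_X1 : ev K (X 1) = e6 K := by simp [ev]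

lemma ev_del : ∃ u : PowerSeries K, ev K (del K) = PowerSeries.X * u ∧ PowerSeries.coeff 0 u = 1728 := by
  have h0 : PowerSeries.constantCoeff (ev K (del K)) = 0 := by
    rw [← PowerSeries.coeff_zero_eq_constantCoeff_apply, constCoeff_ev]
    simp [del]
  obtain ⟨u, hu⟩ := PowerSeries.X_dvd_iff.2 h0
  refine ⟨u, hu, ?_⟩
  have h1 : PowerSeries.coeff 1 (ev K (del K)) = 1728 := by
    rw [del, map_sub, map_pow, map_pow, ev_X0, ev_X1]
    simp [pow_succ, PowerSeries.coeff_mul, Finset.Nat.antidiagonal_succ, e4, e6, e4Z, e6Z, -PowerSeries.coeff_zero_eq_constantCoeff]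
    norm_num
  rw [hu, mul_comm, show (1 : ℕ) = 0 + 1 from rfl, PowerSeries.coeff_succ_mul_X] at h1
  exact h1

lemma coeff_ev_del_lt (m : ℕ) (Q : MvPolynomial (Fin 2) K) (i : ℕ) (hi : i < m) :
    PowerSeries.coeff i (ev K (del K ^ m * Q)) = 0 := by
  obtain ⟨u, hu, -⟩ := ev_del (K := K)
  rw [map_mul, map_pow, hu, mul_pow, mul_assoc]
  exact PowerSeries.X_pow_dvd_iff.1 (dvd_mul_right _ _) i hi

lemma coeff_ev_del_eq (m : ℕ) (Q : MvPolynomial (Fin 2) K) :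
    PowerSeries.coeff m (ev K (del K ^ m * Q)) = 1728 ^ m * PowerSeries.coeff 0 (ev K Q) := by
  obtain ⟨u, hu, h1⟩ := ev_del (K := K)
  rw [map_mul, map_pow, hu, mul_pow, mul_assoc, PowerSeries.coeff_X_pow_mul', if_pos le_rfl,
    Nat.sub_self, ← h1]
  simp

lemma X0_pow_eq (t : ℕ) : ∃ Q : MvPolynomial (Fin 2) K, Hom Q (12 * (t - 1)) ∧
    X 0 ^ (3 * t) = X 1 ^ (2 * t) + del K * Q ∧ (t = 0 → Q = 0) := by
  induction t with
  | zero => exact ⟨0, isWeightedHomogeneous_zero K wt _, by simp, fun _ => rfl⟩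
  | succ t ih =>
    obtain ⟨Q, h1, h2, h3⟩ := ih
    refine ⟨X 0 ^ 3 * Q + X 1 ^ (2 * t), ?_, ?_, by simp⟩
    · refine IsWeightedHomogeneous.add ?_ ?_
      · rcases Nat.eq_zero_or_pos t with rfl | ht
        · rw [h3 rfl, mul_zero]; exact isWeightedHomogeneous_zero K wt _
        · exact hom_mul' (hom_pow hom_X0 3) h1 (by omega)
      · have := hom_pow (K := K) hom_X1 (2 * t)
        rwa [show 2 * t * 6 = 12 * (t + 1 - 1) by omega] at this
    · rw [show 3 * (t + 1) = 3 * t + 3 by ring, pow_add, h2, del]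
      ring

lemma mono_eq (m : Fin 2 →₀ ℕ) (c : K) :
    monomial m c = C c * (X 0 ^ m 0 * X 1 ^ m 1) := by
  rw [monomial_eq, Finsupp.prod_fintype _ _ (by simp), Fin.prod_univ_two]

lemma weight_eq (m : Fin 2 →₀ ℕ) : Finsupp.weight wt m = 4 * m 0 + 6 * m 1 := by
  rw [Finsupp.weight_apply, Finsupp.sum_fintype _ _ (by simp), Fin.sum_univ_two]
  simp [wt, mul_comm]

lemma hom_weight {P : MvPolynomial (Fin 2) K} {w : ℕ} (h : Hom P w) {m : Fin 2 →₀ ℕ}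
    (hm : coeff m P ≠ 0) : 4 * m 0 + 6 * m 1 = w := by
  rw [← weight_eq]; exact h hm

/-- All monomials of weight `w` agree modulo `del`, because `X 0 ^ 3` and `X 1 ^ 2` do. The quotient of
their difference by `del` vanishes if `w < 12`. -/
lemma mono_red (w : ℕ) : ∃ M : MvPolynomial (Fin 2) K, ∀ m : Fin 2 →₀ ℕ, 4 * m 0 + 6 * m 1 = w →
    ∃ Q : MvPolynomial (Fin 2) K, Hom Q (w - 12) ∧ (w < 12 → Q = 0) ∧
      X 0 ^ m 0 * X 1 ^ m 1 = M + del K * Q := by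
  refine ⟨X 0 ^ ((2 * (w / 2)) % 3) * X 1 ^ ((w / 2 - 2 * ((2 * (w / 2)) % 3)) / 3), fun m hm => ?_⟩
  obtain ⟨Q, h1, h2, h3⟩ := X0_pow_eq (K := K) (m 0 / 3)
  have ha : m 0 = 3 * (m 0 / 3) + (2 * (w / 2)) % 3 := by omega
  have hb : (w / 2 - 2 * ((2 * (w / 2)) % 3)) / 3 = 2 * (m 0 / 3) + m 1 := by omega
  refine ⟨X 0 ^ (m 0 % 3) * X 1 ^ m 1 * Q, ?_, ?_, ?_⟩
  · rcases Nat.eq_zero_or_pos (m 0 / 3) with h0 | h0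
    · rw [h3 h0, mul_zero]; exact isWeightedHomogeneous_zero K wt _
    · exact hom_mul' ((hom_pow hom_X0 _).mul (hom_pow hom_X1 _)) h1 (by omega)
  · intro hw; rw [h3 (by omega), mul_zero]
  · rw [hb]
    have hc : (2 * (w / 2)) % 3 = m 0 % 3 := by omega
    rw [hc]
    conv_lhs => rw [ha, hc]
    rw [pow_add, h2, pow_add]
    ring

/-- A form with vanishing constant term is divisible by `del`: its coefficients sum to zero, and modulo
`del` it is this sum times a fixed monomial. -/
lemma del_dvd {P : MvPolynomial (Fin 2) K} {w : ℕ} (h : Hom P w)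
    (h0 : PowerSeries.coeff 0 (ev K P) = 0) :
    ∃ Q, Hom Q (w - 12) ∧ (w < 12 → Q = 0) ∧ P = del K * Q := by
  obtain ⟨M, hM⟩ := mono_red (K := K) w
  choose! Q hQ1 hQ2 hQ3 using hM
  refine ⟨∑ m ∈ P.support, C (coeff m P) * Q m, ?_, ?_, ?_⟩
  · refine (weightedHomogeneousSubmodule K wt _).sum_mem fun m hm => ?_
    exact hom_C_mul _ (hQ1 m (hom_weight h (mem_support_iff.1 hm)))
  · intro hw
    refine Finset.sum_eq_zero fun m hm => ?_
    rw [hQ2 m (hom_weight h (mem_support_iff.1 hm)) hw, mul_zero]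
  · have hs : ∑ m ∈ P.support, coeff m P = 0 := by
      rw [constCoeff_ev, eval_eq] at h0
      simpa using h0
    have h3 : P = ∑ m ∈ P.support, (C (coeff m P) * M + del K * (C (coeff m P) * Q m)) := by
      conv_lhs => rw [P.as_sum]
      refine Finset.sum_congr rfl fun m hm => ?_
      rw [mono_eq, hQ3 m (hom_weight h (mem_support_iff.1 hm))]
      ring
    conv_lhs => rw [h3]
    rw [Finset.sum_add_distrib, ← Finset.sum_mul, ← map_sum, hs, map_zero, zero_mul, zero_add,
      Finset.mul_sum]

lemma del_pow_dvd (m : ℕ) : ∀ {w : ℕ} {P : MvPolynomial (Fin 2) K}, Hom P (w + 12 * m) →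
    (∀ i < m, PowerSeries.coeff i (ev K P) = 0) → ∃ Q, Hom Q w ∧ P = del K ^ m * Q := by
  induction m with
  | zero => intro w P h _; exact ⟨P, by simpa using h, by simp⟩
  | succ m ih =>
    intro w P h h0
    obtain ⟨Q, hQ, rfl⟩ := ih (w := w + 12) (P := P)
      (by rwa [show w + 12 + 12 * m = w + 12 * (m + 1) by ring]) (fun i hi => h0 i (by omega))
    have h1 := h0 m (by omega)
    rw [coeff_ev_del_eq] at h1
    obtain ⟨R, hR, -, rfl⟩ := del_dvd hQ ((mul_eq_zero.1 h1).resolve_left (pow_ne_zero _ (by norm_num)))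
    exact ⟨R, by simpa using hR, by ring⟩

/-- Sturm's bound in level one: a form of weight `w` whose `q`-expansion vanishes up to `w / 12` is zero. -/
lemma sturm {P : MvPolynomial (Fin 2) K} {w : ℕ} (h : Hom P w)
    (h0 : ∀ i ≤ w / 12, PowerSeries.coeff i (ev K P) = 0) : P = 0 := by
  obtain ⟨Q, hQ, rfl⟩ := del_pow_dvd (K := K) (w / 12) (w := w % 12) (P := P)
      (by rwa [Nat.mod_add_div]) (fun i hi => h0 i hi.le)
  have h1 := h0 _ le_rfl
  rw [coeff_ev_del_eq] at h1
  obtain ⟨R, hR, h2, rfl⟩ := del_dvd hQ ((mul_eq_zero.1 h1).resolve_left (pow_ne_zero _ (by norm_num)))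
  rw [h2 (Nat.mod_lt _ (by norm_num))]
  simp

lemma ev_injOn {P Q : MvPolynomial (Fin 2) K} {w : ℕ} (h : Hom P w) (h' : Hom Q w)
    (he : ev K P = ev K Q) : P = Q := by
  rw [← sub_eq_zero]
  exact sturm (hom_sub h h') (fun i _ => by rw [map_sub, he, sub_self, map_zero])

end
end
end Atkin

/-! ### The structure theorem for level one forms -/

namespace Atkin

noncomputable section

open scoped MatrixGroups ModularForm Manifold Real
open UpperHalfPlane ModularForm ModularFormClass EisensteinSeries

/-- The inclusion of rational power series into complex ones. -/
abbrev toC : PowerSeries ℚ →+* PowerSeries ℂ := PowerSeries.map (algebraMap ℚ ℂ)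

lemma qExp_E4 : qExpansion 1 E₄ = toC (e4 ℚ) := by
  ext n
  rw [E_qExpansion_coeff _ ⟨2, rfl⟩]
  simp only [e4, e4Z, PowerSeries.coeff_map, PowerSeries.coeff_mk]
  rw [show bernoulli 4 = -1 / 30 by decide +kernel]
  split_ifs
  · simp
  · push_cast
    norm_num

lemma qExp_E6 : qExpansion 1 E₆ = toC (e6 ℚ) := by
  ext n
  rw [E_qExpansion_coeff _ ⟨3, rfl⟩]
  simp only [e6, e6Z, PowerSeries.coeff_map, PowerSeries.coeff_mk]
  rw [show bernoulli 6 = 1 / 42 by decide +kernel]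
  split_ifs
  · simp
  · push_cast
    norm_num

/-- `φ` is the `q`-expansion of a level one modular form of weight `k`. -/
def IsMF (k : ℕ) (φ : PowerSeries ℚ) : Prop :=
  ∃ f : ModularForm 𝒮ℒ (k : ℤ), qExpansion 1 f = toC φ

lemma IsMF.add {k : ℕ} {φ ψ : PowerSeries ℚ} (h : IsMF k φ) (h' : IsMF k ψ) : IsMF k (φ + ψ) := by
  obtain ⟨f, hf⟩ := h
  obtain ⟨g, hg⟩ := h'
  refine ⟨f + g, ?_⟩
  rw [map_add, ← hf, ← hg]
  exact ModularForm.qExpansion_add one_pos one_mem_strictPeriods_SL f g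

lemma IsMF.smul {k : ℕ} {φ : PowerSeries ℚ} (c : ℚ) (h : IsMF k φ) : IsMF k (c • φ) := by
  obtain ⟨f, hf⟩ := h
  refine ⟨(c : ℂ) • f, ?_⟩
  have := ModularForm.qExpansion_smul one_pos one_mem_strictPeriods_SL (c : ℂ) f
  refine (Eq.trans ?_ this).trans ?_
  · rfl
  rw [hf]
  ext n
  simp

lemma isMF_zero (k : ℕ) : IsMF k 0 := ⟨0, by
  rw [map_zero]; exact qExpansion_zero 1⟩

lemma isMF_mono (a b : ℕ) : IsMF (4 * a + 6 * b) (e4 ℚ ^ a * e6 ℚ ^ b) := by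
  refine ⟨ModularForm.mcast (by push_cast; ring) ((E₄.pow a).mul (E₆.pow b)), ?_⟩
  rw [ModularForm.qExpansion_mcast, ModularForm.qExpansion_mul one_pos one_mem_strictPeriods_SL,
    ModularForm.qExpansion_pow one_pos one_mem_strictPeriods_SL,
    ModularForm.qExpansion_pow one_pos one_mem_strictPeriods_SL, qExp_E4, qExp_E6]
  simp

open MvPolynomial in
lemma ev_mono (m : Fin 2 →₀ ℕ) (c : ℚ) :
    ev ℚ (monomial m c) = c • (e4 ℚ ^ m 0 * e6 ℚ ^ m 1) := by
  rw [mono_eq, ← smul_eq_C_mul, map_smul, map_mul, map_pow, map_pow, ev_X0, ev_X1]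

open MvPolynomial in
lemma isMF_of_hom {P : MvPolynomial (Fin 2) ℚ} {k : ℕ} (h : Hom P k) : IsMF k (ev ℚ P) := by
  rw [P.as_sum, map_sum]
  refine Finset.sum_induction _ (IsMF k) (fun _ _ => IsMF.add) (isMF_zero k) fun m hm => ?_
  rw [ev_mono]
  have := isMF_mono (m 0) (m 1)
  rw [hom_weight h (mem_support_iff.1 hm)] at this
  exact this.smul _

/-- `Δ = (E₄³ - E₆²) / 1728` on `q`-expansions, with the order of vanishing made explicit. -/
lemma qExp_disc : ∃ u : PowerSeries ℚ, qExpansion 1 discriminant = toC (PowerSeries.X * u) ∧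
    PowerSeries.X * u = (1728⁻¹ : ℚ) • ev ℚ (del ℚ) ∧ PowerSeries.constantCoeff u = 1 := by
  obtain ⟨u, hu, h1⟩ := ev_del (K := ℚ)
  refine ⟨(1728⁻¹ : ℚ) • u, ?_, by rw [hu, mul_smul_comm], by
    rw [← PowerSeries.coeff_zero_eq_constantCoeff_apply, map_smul, h1]; norm_num⟩
  set F : ModularForm 𝒮ℒ 12 := ModularForm.mcast (by decide) (E₄.pow 3) -
    ModularForm.mcast (by decide) (E₆.pow 2) with hF
  have hFq : qExpansion 1 F = toC (ev ℚ (del ℚ)) := by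
    simp only [hF, FunLike.coe_sub, ModularForm.coe_mcast,
      ModularForm.qExpansion_sub one_pos one_mem_strictPeriods_SL,
      ModularForm.qExpansion_pow one_pos one_mem_strictPeriods_SL]
    rw [qExp_E4, qExp_E6, del, map_sub, map_pow, map_pow, ev_X0, ev_X1, map_sub, map_pow, map_pow]
  have he : (discriminant : ℍ → ℂ) = ((1728⁻¹ : ℚ) : ℂ) • (F : ℍ → ℂ) := by
    ext z
    rw [discriminant_eq_E₄_cube_sub_E₆_sq]
    simp only [hF, ModularForm.coe_mcast, ModularForm.coe_pow, sub_apply,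
      Pi.pow_apply, Pi.smul_apply, smul_eq_mul, div_eq_inv_mul]
    push_cast
    rfl
  rw [he, ModularForm.qExpansion_smul one_pos one_mem_strictPeriods_SL, hFq, mul_smul_comm, hu]
  ext n
  rw [PowerSeries.coeff_smul, PowerSeries.coeff_map, PowerSeries.coeff_map, PowerSeries.coeff_smul]
  simp

/-- The structure theorem, over `ℚ`: a level one form with rational coefficients is an isobaric
polynomial in `E₄` and `E₆`. Subtracting a monomial removes the constant term, and the resulting cusp
form is `Δ` times a form of weight `k - 12`. -/
lemma hom_of_isMF (k : ℕ) : ∀ φ : PowerSeries ℚ, IsMF k φ → ∃ Q, Hom Q k ∧ ev ℚ Q = φ := by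
  induction k using Nat.strong_induction_on with | _ k ih => ?_
  intro φ ⟨f, hf⟩
  have hinj : Function.Injective toC := PowerSeries.map_injective _ (algebraMap ℚ ℂ).injective
  have hz : f = 0 → ∃ Q, Hom Q k ∧ ev ℚ Q = φ := by
    rintro rfl
    refine ⟨0, MvPolynomial.isWeightedHomogeneous_zero _ _ _, ?_⟩
    rw [map_zero]
    apply hinj
    rw [← hf, map_zero]
    exact (qExpansion_zero 1).symm
  by_cases hk : ∃ a b, k = 4 * a + 6 * b
  swap
  · apply hz
    rcases Nat.even_or_odd k with he | ho
    · have : k = 2 := by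
        by_contra h2
        obtain ⟨c, rfl⟩ := he
        apply hk
        rcases Nat.even_or_odd c with ⟨d, rfl⟩ | ⟨d, rfl⟩
        · exact ⟨d, 0, by ring⟩
        · exact ⟨d - 1, 1, by omega⟩
      subst this
      exact rank_zero_iff_forall_zero.1 levelOne_weight_two_rank_zero f
    · exact ModularForm.levelOne_odd_weight_eq_zero (by exact_mod_cast ho) f
  obtain ⟨a, b, hab⟩ := hk
  have hmono := isMF_mono a b
  rw [← hab] at hmono
  set c := PowerSeries.coeff 0 φ with hc
  obtain ⟨g, hg⟩ := IsMF.add ⟨f, hf⟩ (hmono.smul (-c))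
  have hM : Hom (MvPolynomial.C c * (MvPolynomial.X 0 ^ a * MvPolynomial.X 1 ^ b)) k := by
    apply hom_C_mul
    exact hom_mul' (hom_pow hom_X0 a) (hom_pow hom_X1 b) (by omega)
  have hMe : ev ℚ (MvPolynomial.C c * (MvPolynomial.X 0 ^ a * MvPolynomial.X 1 ^ b)) =
      c • (e4 ℚ ^ a * e6 ℚ ^ b) := by
    rw [← MvPolynomial.smul_eq_C_mul, map_smul, map_mul, map_pow, map_pow, ev_X0, ev_X1]
  suffices h : ∃ Q, Hom Q k ∧ ev ℚ Q = φ + (-c) • (e4 ℚ ^ a * e6 ℚ ^ b) by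
    obtain ⟨Q, hQ, hQe⟩ := h
    refine ⟨Q + MvPolynomial.C c * (MvPolynomial.X 0 ^ a * MvPolynomial.X 1 ^ b), hQ.add hM, ?_⟩
    rw [map_add, hQe, hMe]
    simp
  have h0 : PowerSeries.coeff 0 (φ + (-c) • (e4 ℚ ^ a * e6 ℚ ^ b)) = 0 := by
    have := constCoeff_ev (MvPolynomial.X 0 ^ a * MvPolynomial.X 1 ^ b : MvPolynomial (Fin 2) ℚ)
    rw [map_mul, map_pow, map_pow, ev_X0, ev_X1] at this
    rw [map_add, map_smul, this]
    simp [hc]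
  generalize φ + (-c) • (e4 ℚ ^ a * e6 ℚ ^ b) = ψ at hg h0
  have hg0 : (qExpansion 1 g).coeff 0 = 0 := by rw [hg, PowerSeries.coeff_map, h0, map_zero]
  obtain ⟨u, hu, hud, hu1⟩ := qExp_disc
  have hmul := qExpansion_eq_qExpansion_discriminant_mul g hg0
  obtain ⟨χ, rfl⟩ := PowerSeries.X_dvd_iff.2 ((PowerSeries.coeff_zero_eq_constantCoeff_apply _).symm.trans h0)
  set g' := CuspForm.discriminantEquiv (toCuspForm g hg0) with hg'
  have hχ : qExpansion 1 g' = toC (u⁻¹ * χ) := by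
    have h2 : toC PowerSeries.X * (toC u * qExpansion 1 g') = toC PowerSeries.X * toC χ := by
      rw [← mul_assoc, ← map_mul, ← hu, ← hmul, hg, map_mul]
    have h3 := mul_left_cancel₀ (by simp [PowerSeries.X_ne_zero]) h2
    rw [map_mul, ← h3, ← mul_assoc, ← map_mul, PowerSeries.inv_mul_cancel _ (by rw [hu1]; norm_num),
      map_one, one_mul]
  have hχ2 : PowerSeries.X * χ = (1728⁻¹ : ℚ) • (ev ℚ (del ℚ) * (u⁻¹ * χ)) := by
    rw [← smul_mul_assoc, ← hud, mul_assoc, ← mul_assoc u, PowerSeries.mul_inv_cancel _ (by rw [hu1]; norm_num),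
      one_mul]
  rcases lt_or_ge k 12 with hk12 | hk12
  · have hg0 : g' = 0 :=
      rank_zero_iff_forall_zero.mp (ModularForm.levelOne_neg_weight_rank_zero (by omega)) g'
    refine ⟨0, MvPolynomial.isWeightedHomogeneous_zero _ _ _, ?_⟩
    have : u⁻¹ * χ = 0 := by
      apply hinj
      rw [← hχ, hg0, map_zero]
      exact qExpansion_zero 1
    rw [hχ2, this]; simp
  · obtain ⟨Q, hQ, hQe⟩ := ih (k - 12) (by omega) (u⁻¹ * χ)
      ⟨ModularForm.mcast (by push_cast [hk12]; rfl) g', by rw [ModularForm.qExpansion_mcast, hχ]⟩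
    refine ⟨MvPolynomial.C 1728⁻¹ * (del ℚ * Q), hom_C_mul _ (hom_mul' hom_del hQ (by omega)), ?_⟩
    rw [← MvPolynomial.smul_eq_C_mul, map_smul, map_mul, hQe, hχ2]

/-- The operator `Tr`, which is `11 T₁₁`, acts on isobaric polynomials. -/
lemma exists_trace {k : ℕ} {P : MvPolynomial (Fin 2) ℚ} (h : Hom P k) :
    ∃ Q, Hom Q k ∧ ev ℚ Q = Tr k (ev ℚ P) := by
  obtain ⟨f, hf⟩ := isMF_of_hom h
  apply hom_of_isMF
  refine ⟨(11 : ℂ) • heckeForm f, ?_⟩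
  refine (ModularForm.qExpansion_smul one_pos one_mem_strictPeriods_SL (11 : ℂ) (heckeForm f)).trans ?_
  ext n
  rw [PowerSeries.coeff_smul, heckeForm_qExpansion, hf, PowerSeries.coeff_map,
    PowerSeries.coeff_map, PowerSeries.coeff_map, coeff_Tr, smul_eq_mul, mul_add, ← mul_assoc,
    ← zpow_one_add₀ (by norm_num)]
  split_ifs <;> simp

end
end Atkin

/-! ### The modular equations of level 11: tables and numerical checks -/

namespace Atkin

/-- The elementary symmetric functions of the twelve conjugates of `E₄`, namely `11 ^ 4 E₄(11 τ)` and
`E₄((τ + l) / 11)` for `0 ≤ l < 11`. The `j`-th list describes the `j`-th function, which is a form of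
weight `4 j`: a triple `(c, a, b)` stands for the term `c E₄ᵃ E₆ᵇ`. -/
def esymE4 : List (List (ℤ × ℕ × ℕ)) :=
  [[(1,0,0)],
   [(14652,1,0)],
   [(161106,2,0)],
   [(378488000000,0,2), (-378487194580,3,0)],
   [(-806305579200000,1,2), (806305581616095,4,0)],
   [(424378648108800000,2,2), (-424378648103968008,5,0)],
   [(194059810222080000000,0,4), (-469052742220972800000,3,2), (274992931998899564604,6,0)],
   [(-53183668508467200000000,1,4), (113135596015571395200000,4,2), (-59951927507104188435528,7,0)],
   [(20425638639230668800000000,2,4), (-41128794565098392592000000,5,2), (20703155925867723796831695,8,0)],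
   [(-985770885008588800000000000,0,6), (1222367266029343948800000000,3,4), (518512153043552130988800000,6,2), (-755108534064307279786384180,9,0)],
   [(-132166785682750832640000000000,1,6), (585766642076934699110400000000,4,4), (-775100017709978816830867200000,7,2), (321500161315794950360468005266,10,0)],
   [(-4090598117470383636480000000000,2,6), (6005662174784289612718080000000,5,4), (260848582942196804004331200000,8,2), (-2175912640256102780242411038948,11,0)],
   [(2590085296973305348096000000000000,0,8), (-8950476957320806710640640000000000,3,6), (11534939082026921878148198400000000,6,4), (-6578789317297623678617516676800000,9,2), (1404241895618203163013958276814641,12,0)]]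

/-- The elementary symmetric functions of the twelve conjugates of `E₆`, namely `11 ^ 6 E₆(11 τ)` and
`E₆((τ + l) / 11)`, encoded as in `esymE4`. -/
def esymE6 : List (List (ℤ × ℕ × ℕ)) :=
  [[(1,0,0)],
   [(1771572,0,1)],
   [(1001498735226,0,2), (-1001479248000,3,0)],
   [(153252420083948020,0,3), (-153252419986512000,3,1)],
   [(-14827984355569355724105,0,4), (30902745346077502497600,3,2), (-16074760990507854465600,6,0)],
   [(414055366567835534906087592,0,5), (-826697244656813429547648000,3,3), (412641878088977895226176000,6,1)],
   [(-4525394179355348034756305410356,0,6), (10579348110913904104309633075200,3,4), (-7582141362693259781525274981120,6,2), (1528187431134703711972765777920,9,0)],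
   [(17909119259011168933097952464509512,0,7), (-47586692754124903925473435736659200,3,5), (41446059471608216733029162247206400,6,3), (-11768485976494481740653678156595200,9,1)],
   [(-50743494242563965161044765775254872705,0,8), (211041015216235894232328897516514032000,3,6), (-333456614918861804048475202576473072000,6,4), (236764162272563342845621834509600399360,9,2), (-63605068327373467868430763673801871360,12,0)],
   [(89733249115049652303037464533615097875620,0,9), (-442246750871730625687078151138779546982400,3,7), (789892994077230349813087971447426806976000,6,5), (-611978731980817148802277774133899413749760,9,3), (174599239660267772373230489291637348188160,12,1)],
   [(-120194088058511297852514419079217643286292134,0,10), (330812876910729159811322981861139681053328000,3,8), (-54572289753664979861810294454085540854086400,6,6), (-619462286088940008305813347322649195126620160,9,4), (680360374088673241650392773141008873926270976,12,2), (-216944587098286115441577694146196175615164416,15,0)],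
   [(95261747725716358139099882339157556201983215172,0,11), (-82428144033345323335979218682199662788774876800,3,9), (-636126941721644109864782892901320253886623864320,6,7), (1450350957375436708884938549722501114941566238720,9,5), (-1138917252081140926738160404608810123996386672640,12,3), (311859632734977292914884084130671369528255447040,15,1)],
   [(-52621459462958364258709701180226625879532759028439,0,12), (227907830041041338415824843041257616396435183636800,3,10), (-563078318335801069554459369347629719009380014900800,6,8), (1026255453404506517372590469599772962012581261680640,9,6), (-1190053486272521741142785164669859205804807415910400,12,4), (729843492247271702923139243231977788256699154694144,15,2), (-178253511621538383755600320675292815971995408400384,18,0)]]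

/-- The first 67 coefficients of `E₄`. Newton's identities for the conjugates of `E₄` and `E₆` are
identities between forms of weight at most `72`, so they have to be compared up to `q ^ 6`, and there
the operator `U` involves the coefficients up to `q ^ 66`. -/
def listE4 : List ℤ :=
  [1, 240, 2160, 6720, 17520, 30240, 60480, 82560, 140400, 181680, 272160, 319680, 490560, 527520, 743040, 846720, 1123440, 1179360, 1635120, 1646400, 2207520, 2311680, 2877120, 2920320, 3931200, 3780240, 4747680, 4905600, 6026880, 5853600, 7620480, 7150080, 8987760, 8951040, 10614240, 10402560, 13262640, 12156960, 14817600, 14770560, 17690400, 16541280, 20805120, 19081920, 23336640, 22891680, 26282880, 24917760, 31456320, 28318320, 34022160, 33022080, 38508960, 35730720, 44150400, 40279680, 48297600, 46099200, 52682400, 49291200, 61810560, 54475680, 64350720, 62497920, 71902320, 66467520, 80559360]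

/-- The first 67 coefficients of `E₆`. -/
def listE6 : List ℤ :=
  [1, -504, -16632, -122976, -532728, -1575504, -4058208, -8471232, -17047800, -29883672, -51991632, -81170208, -129985632, -187132176, -279550656, -384422976, -545530104, -715608432, -986161176, -1247954400, -1665307728, -2066980608, -2678616864, -3243917376, -4159663200, -4923450504, -6175361808, -7261732800, -8954092224, -10337619600, -12685958208, -14429092608, -17456963832, -19805530752, -23615078256, -26481071232, -31587041304, -34949354832, -41182495200, -45660250944, -53291422800, -58391525808, -68210360064, -74092255776, -85796909856, -93416358672, -107049273408, -115589884032, -133109345376, -142375996728, -162473866632, -174608457408, -197798710032, -210770528976, -239637182400, -253738070208, -286539422400, -304500873600, -341141446800, -360321847200, -406335085632, -425676536208, -476160056064, -502284758976, -558622843128, -584975182176, -653582514816]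

/-- Sum of two integer lists, padded with zeros. -/
def ladd : List ℤ → List ℤ → List ℤ
  | [], b => b
  | x :: a, [] => x :: a
  | x :: a, y :: b => (x + y) :: ladd a b

/-- Product of two integer lists, seen as polynomials, truncated to `n` coefficients. -/
def lmul : ℕ → List ℤ → List ℤ → List ℤ
  | 0, _, _ => []
  | _ + 1, [], _ => []
  | n + 1, x :: a, b => ladd ((b.take (n + 1)).map (x * ·)) (0 :: lmul n a b)

/-- The power `l ^ i`, truncated to `n` coefficients. -/
def lpow (n : ℕ) (l : List ℤ) : ℕ → List ℤ
  | 0 => [1]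
  | i + 1 => lmul n l (lpow n l i)

/-- The first 7 coefficients of `c E₄ᵃ E₆ᵇ`. -/
def levalMono (p : ℤ × ℕ × ℕ) : List ℤ :=
  (lmul 7 (lpow 7 listE4 p.2.1) (lpow 7 listE6 p.2.2)).map (p.1 * ·)

/-- The first 7 coefficients of the form described by a list of terms. -/
def leval (e : List (ℤ × ℕ × ℕ)) : List ℤ := e.foldr (fun p s => ladd (levalMono p) s) []

/-- The first 7 coefficients of `Tr w φ`, where `l` gives the first 67 coefficients of `φ`. -/
def ltrace (w : ℕ) (l : List ℤ) : List ℤ :=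
  (List.range 7).map fun n => 11 * l.getD (11 * n) 0 + 11 ^ w * if 11 ∣ n then l.getD (n / 11) 0 else 0

/-- The first 7 coefficients of `∑ (-1) ^ i eᵢ pⱼ₋ᵢ` over `i < j`, the sum in Newton's identity for
`j eⱼ`. Here `eᵢ` is read from the table, and the power sum `pᵢ` of the conjugates of `φ` is
`Tr (w i) (φ ^ i)`. -/
def lnewton (e : List (List (ℤ × ℕ × ℕ))) (w : ℕ) (l : List ℤ) (j : ℕ) : List ℤ :=
  (List.range j).foldr (fun i s => ladd (((lmul 7 (leval (e.getD i []))
    (ltrace (w * (j - i)) (lpow 67 l (j - i)))).map ((-1) ^ i * ·))) s) []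

/-- Newton's identities for the table `esymE4`, up to Sturm's bound. -/
lemma newton_check4 : ∀ j < 13, ∀ i < 7, j * (leval (esymE4.getD j [])).getD i 0 =
    (-1) ^ (j + 1) * (lnewton esymE4 4 listE4 j).getD i 0 := by decide +kernel

/-- Newton's identities for the table `esymE6`, up to Sturm's bound. -/
lemma newton_check6 : ∀ j < 13, ∀ i < 7, j * (leval (esymE6.getD j [])).getD i 0 =
    (-1) ^ (j + 1) * (lnewton esymE6 6 listE6 j).getD i 0 := by decide +kernel
end Atkin

/-! ### Correctness of the truncated computations -/

namespace Atkin

noncomputable section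

lemma getD_ladd (a b : List ℤ) (i : ℕ) : (ladd a b).getD i 0 = a.getD i 0 + b.getD i 0 := by
  induction a generalizing b i with
  | nil => simp [ladd]
  | cons x a ih =>
    cases b with
    | nil => simp [ladd]
    | cons y b => cases i with
      | zero => rfl
      | succ i => exact ih b i

lemma getD_map_mul (c : ℤ) (a : List ℤ) (i : ℕ) : (a.map (c * ·)).getD i 0 = c * a.getD i 0 := by
  simp only [List.getD_eq_getElem?_getD, List.getElem?_map]
  cases a[i]? <;> simp

/-- The list `l` gives the first `n` coefficients of `φ`. -/
def Ap (n : ℕ) (l : List ℤ) (φ : PowerSeries ℤ) : Prop :=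
  ∀ i < n, l.getD i 0 = PowerSeries.coeff i φ

lemma getD_lmul (n : ℕ) (a b : List ℤ) (i : ℕ) (hi : i < n) : (lmul n a b).getD i 0 =
    ∑ p ∈ Finset.HasAntidiagonal.antidiagonal i, a.getD p.1 0 * b.getD p.2 0 := by
  induction n generalizing a i with
  | zero => omega
  | succ n ih =>
    cases a with
    | nil => simp [lmul]
    | cons x a =>
      rw [lmul, getD_ladd, getD_map_mul]
      have h1 : (b.take (n + 1)).getD i 0 = b.getD i 0 := by
        simp [List.getD_eq_getElem?_getD, hi]
      rw [h1]
      cases i with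
      | zero => simp
      | succ i =>
        rw [Finset.Nat.antidiagonal_succ, Finset.sum_cons, Finset.sum_map]
        simp only [List.getD_cons_succ, List.getD_cons_zero]
        rw [ih a i (by omega)]
        rfl

lemma Ap.mul {n : ℕ} {a b : List ℤ} {φ ψ : PowerSeries ℤ} (ha : Ap n a φ) (hb : Ap n b ψ) :
    Ap n (lmul n a b) (φ * ψ) := by
  intro i hi
  rw [getD_lmul n a b i hi, PowerSeries.coeff_mul]
  refine Finset.sum_congr rfl fun p hp => ?_
  have := Finset.HasAntidiagonal.mem_antidiagonal.1 hp
  rw [ha p.1 (by omega), hb p.2 (by omega)]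

lemma Ap.add {n : ℕ} {a b : List ℤ} {φ ψ : PowerSeries ℤ} (ha : Ap n a φ) (hb : Ap n b ψ) :
    Ap n (ladd a b) (φ + ψ) := by
  intro i hi
  rw [getD_ladd, ha i hi, hb i hi, map_add]

lemma Ap.smul {n : ℕ} {a : List ℤ} {φ : PowerSeries ℤ} (c : ℤ) (ha : Ap n a φ) :
    Ap n (a.map (c * ·)) (PowerSeries.C c * φ) := by
  intro i hi
  rw [getD_map_mul, ha i hi, PowerSeries.coeff_C_mul]

lemma Ap.pow {n : ℕ} {a : List ℤ} {φ : PowerSeries ℤ} (ha : Ap n a φ) (i : ℕ) :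
    Ap n (lpow n a i) (φ ^ i) := by
  induction i with
  | zero => intro i _; cases i <;> simp [lpow, PowerSeries.coeff_one]
  | succ i ih => rw [pow_succ']; exact ha.mul ih

lemma Ap.mono {n n' : ℕ} {a : List ℤ} {φ : PowerSeries ℤ} (ha : Ap n a φ) (h : n' ≤ n) :
    Ap n' a φ := fun i hi => ha i (by omega)

lemma Ap.trace {l : List ℤ} {φ : PowerSeries ℤ} (h : Ap 67 l φ) (w : ℕ) :
    Ap 7 (ltrace w l) (Tr w φ) := by
  intro i hi
  rw [coeff_Tr, ltrace, ← h _ (by omega), ← h _ (by omega)]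
  simp [List.getD_eq_getElem?_getD, hi]

lemma ap_listE4 : Ap 67 listE4 (e4 ℤ) := by
  have h : ∀ i < 67, listE4.getD i 0 =
      if i = 0 then 1 else 240 * (ArithmeticFunction.sigma 3 i : ℤ) := by decide +kernel
  intro i hi
  rw [h i hi]; simp [e4, e4Z]

lemma ap_listE6 : Ap 67 listE6 (e6 ℤ) := by
  have h : ∀ i < 67, listE6.getD i 0 =
      if i = 0 then 1 else -504 * (ArithmeticFunction.sigma 5 i : ℤ) := by decide +kernel
  intro i hi
  rw [h i hi]; simp [e6, e6Z]

open MvPolynomial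

/-- The integral polynomial in two variables given by a list of terms. -/
def lpoly (e : List (ℤ × ℕ × ℕ)) : MvPolynomial (Fin 2) ℤ :=
  (e.map fun p => C p.1 * (X 0 ^ p.2.1 * X 1 ^ p.2.2)).sum

lemma ev_map {R S : Type*} [CommRing R] [CommRing S] (f : R →+* S) (P : MvPolynomial (Fin 2) R) :
    ev S (MvPolynomial.map f P) = PowerSeries.map f (ev R P) := by
  induction P using MvPolynomial.induction_on with
  | C a =>
    rw [map_C, ev, ev, aeval_C, aeval_C, PowerSeries.algebraMap_apply, PowerSeries.algebraMap_apply]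
    simp
  | add p q hp hq => rw [map_add, map_add, map_add, hp, hq, map_add]
  | mul_X p i hp =>
    rw [map_mul, map_mul, map_X, hp, map_mul, map_mul]
    congr 1
    ext n
    fin_cases i <;> simp [ev, e4, e6]

lemma Tr_map {R S : Type*} [CommRing R] [CommRing S] (f : R →+* S) (w : ℕ) (φ : PowerSeries R) :
    PowerSeries.map f (Tr w φ) = Tr w (PowerSeries.map f φ) := by
  ext n
  rw [coeff_Tr, PowerSeries.coeff_map, coeff_Tr]
  split_ifs <;> simp [map_ofNat]

lemma ap_leval (e : List (ℤ × ℕ × ℕ)) : Ap 7 (leval e) (ev ℤ (lpoly e)) := by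
  induction e with
  | nil => intro i _; simp [leval, lpoly]
  | cons p e ih =>
    rw [lpoly, List.map_cons, List.sum_cons, map_add]
    refine Ap.add ?_ ih
    have : ev ℤ (C p.1 * (X 0 ^ p.2.1 * X 1 ^ p.2.2)) =
        PowerSeries.C p.1 * (e4 ℤ ^ p.2.1 * e6 ℤ ^ p.2.2) := by
      rw [map_mul, map_mul, map_pow, map_pow]
      simp [ev]
    rw [this]
    exact (((ap_listE4.mono (by norm_num)).pow _).mul ((ap_listE6.mono (by norm_num)).pow _)).smul _

lemma ap_newton (es : List (List (ℤ × ℕ × ℕ))) (w : ℕ) {l : List ℤ} {φ : PowerSeries ℤ}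
    (h : Ap 67 l φ) (j : ℕ) : Ap 7 (lnewton es w l j) (∑ i ∈ Finset.range j,
      PowerSeries.C ((-1) ^ i) * (ev ℤ (lpoly (es.getD i [])) * Tr (w * (j - i)) (φ ^ (j - i)))) := by
  have key : ∀ L : List ℕ, Ap 7 (L.foldr (fun i s => ladd (((lmul 7 (leval (es.getD i []))
    (ltrace (w * (j - i)) (lpow 67 l (j - i)))).map ((-1) ^ i * ·))) s) [])
      (L.map fun i => PowerSeries.C ((-1) ^ i) *
        (ev ℤ (lpoly (es.getD i [])) * Tr (w * (j - i)) (φ ^ (j - i)))).sum := by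
    intro L
    induction L with
    | nil => intro i _; simp
    | cons i L ih =>
      rw [List.map_cons, List.sum_cons]
      exact (((ap_leval _).mul ((h.pow _).trace _)).smul _).add ih
  have := key (List.range j)
  exact this

end
end Atkin

/-! ### The twelve conjugates -/

namespace Atkin

noncomputable section

open MvPolynomial

/-- The ring `ℂ⟦s⟧[t]`, with `s ^ 11 = q`. The variable `t` records the weight. -/
abbrev ST := Polynomial (PowerSeries ℂ)

/-- Complex polynomials in `E₄` and `E₆`. -/
abbrev BC := MvPolynomial (Fin 2) ℂ

/-- The `q`-expansions of the two generators. -/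
def ser (i : Fin 2) : PowerSeries ℂ := ![e4 ℂ, e6 ℂ] i

/-- The homomorphism sending a form `f` of weight `w` to `θ(f) (c t) ^ w`. The factor `t ^ w` lets one
homomorphism serve forms of all weights. -/
def Theta (θ : PowerSeries ℂ →ₐ[ℂ] PowerSeries ℂ) (c : ℂ) : BC →ₐ[ℂ] ST :=
  aeval fun i => Polynomial.C (θ (ser i)) * (Polynomial.C (PowerSeries.C c) * Polynomial.X) ^ wt i

lemma Theta_monomial (θ : PowerSeries ℂ →ₐ[ℂ] PowerSeries ℂ) (c : ℂ) (m : Fin 2 →₀ ℕ) (a : ℂ) :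
    Theta θ c (monomial m a) = Polynomial.C (θ (ev ℂ (monomial m a))) *
      (Polynomial.C (PowerSeries.C c) * Polynomial.X) ^ Finsupp.weight wt m := by
  rw [weight_eq, mono_eq, Theta, ev, ← smul_eq_C_mul, map_smul, map_smul, map_smul]
  simp only [map_mul, map_pow, aeval_X, Fin.isValue]
  simp only [ser, wt, Matrix.cons_val_zero, Matrix.cons_val_one]
  rw [pow_add, pow_mul, pow_mul]
  have : Polynomial.C (a • (θ (e4 ℂ) ^ m 0 * θ (e6 ℂ) ^ m 1)) =
    a • (Polynomial.C (θ (e4 ℂ)) ^ m 0 * Polynomial.C (θ (e6 ℂ)) ^ m 1) := by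
    simp only [← map_pow, ← map_mul, ← Polynomial.smul_C]
  rw [this, smul_mul_assoc]
  congr 1
  ring

lemma Theta_hom (θ : PowerSeries ℂ →ₐ[ℂ] PowerSeries ℂ) (c : ℂ) {P : BC} {w : ℕ} (h : Hom P w) :
    Theta θ c P = Polynomial.C (θ (ev ℂ P)) *
      (Polynomial.C (PowerSeries.C c) * Polynomial.X) ^ w := by
  conv_lhs => rw [P.as_sum]
  conv_rhs => rw [P.as_sum]
  rw [map_sum, map_sum, map_sum, map_sum, Finset.sum_mul]
  refine Finset.sum_congr rfl fun m hm => ?_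
  rw [Theta_monomial, h (mem_support_iff.1 hm)]

/-- The evaluation at `E₄(s¹¹) t⁴`, `E₆(s¹¹) t⁶`: it embeds the ring of level one forms in `ℂ⟦s⟧[t]`. -/
abbrev Phi : BC →ₐ[ℂ] ST := Theta V 1

lemma Phi_coeff (P : BC) (w : ℕ) :
    (Phi P).coeff w = V (ev ℂ (weightedHomogeneousComponent wt w P)) := by
  conv_lhs => rw [P.as_sum]
  conv_rhs => rw [P.as_sum]
  rw [map_sum, map_sum, map_sum, map_sum, Polynomial.finsetSum_coeff]
  refine Finset.sum_congr rfl fun m _ => ?_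
  rw [Theta_monomial, map_one, map_one, one_mul, Polynomial.coeff_C_mul, Polynomial.coeff_X_pow]
  have hm := isWeightedHomogeneous_monomial wt m (coeff m P) rfl
  split_ifs with hw
  · rw [hw, hm.weightedHomogeneousComponent_same, mul_one]
  · rw [hm.weightedHomogeneousComponent_ne _ hw]; simp

lemma V_injective {R : Type*} [CommRing R] : Function.Injective (V : PowerSeries R → PowerSeries R) := by
  intro φ ψ h
  ext n
  have := congrArg (PowerSeries.coeff (11 * n)) h
  simpa [PowerSeries.coeff_expand] using this

lemma Phi_injective : Function.Injective Phi := by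
  rw [injective_iff_map_eq_zero]
  intro P hP
  ext m
  have h1 := Phi_coeff P (Finsupp.weight wt m)
  rw [hP, Polynomial.coeff_zero] at h1
  have h2 := V_injective (h1.symm.trans (map_zero V).symm)
  have h3 := ev_injOn (weightedHomogeneousComponent_isWeightedHomogeneous (Finsupp.weight wt m) P)
    (isWeightedHomogeneous_zero ℂ wt _) (h2.trans (map_zero _).symm)
  have h4 := congrArg (coeff m) h3
  rwa [coeff_weightedHomogeneousComponent, if_pos rfl] at h4

/-- A primitive eleventh root of unity. -/
def zeta : ℂ := Complex.exp (2 * Real.pi * Complex.I / (11 : ℕ))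

lemma zeta_prim : IsPrimitiveRoot zeta 11 := Complex.isPrimitiveRoot_exp 11 (by norm_num)

/-- The twelve conjugates of level one forms: `f((τ + l) / 11)`, with expansion `f(ζˡ s)`, and
`11 ^ w f(11 τ)`, with expansion `11 ^ w f(s¹²¹)`. -/
def conj : Option (Fin 11) → BC →ₐ[ℂ] ST
  | some l => Theta (PowerSeries.rescaleAlgHom (zeta ^ (l : ℕ))) 1
  | none => Theta (V.comp V) 11

/-- The trace `Tr`, which is eleven times the Hecke operator, is the sum of the conjugates. -/
lemma sum_conj {P Q : BC} {w : ℕ} (hP : Hom P w) (hQ : Hom Q w) (h : ev ℂ Q = Tr w (ev ℂ P)) :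
    ∑ γ, conj γ P = Phi Q := by
  rw [Fintype.sum_option, Phi, Theta_hom _ _ hQ, h]
  simp only [conj]
  rw [Theta_hom _ _ hP]
  simp only [Theta_hom _ _ hP]
  simp only [map_one, one_mul]
  rw [← Finset.sum_mul, mul_pow, ← map_pow, ← map_pow, ← mul_assoc, ← map_mul, ← map_sum,
    ← add_mul, ← map_add]
  congr 2
  generalize ev ℂ P = φ
  ext n
  have hs : ∑ x : Fin 11, PowerSeries.coeff n ((PowerSeries.rescaleAlgHom (zeta ^ (x : ℕ))) φ) =
      (if 11 ∣ n then 11 else 0) * PowerSeries.coeff n φ := by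
    rw [← sum_root_pow zeta zeta_prim n, ← Fin.sum_univ_eq_sum_range (fun l => (zeta ^ l) ^ n),
      Finset.sum_mul]
    refine Finset.sum_congr rfl fun l _ => ?_
    rw [← PowerSeries.coeff_rescale, ← PowerSeries.coe_rescaleAlgHom]
    rfl
  rw [map_add, map_sum, hs, PowerSeries.coeff_mul_C, AlgHom.comp_apply, PowerSeries.coeff_expand,
    PowerSeries.coeff_expand, PowerSeries.coeff_expand, coeff_Tr]
  split_ifs with h1 h2
  · rw [Nat.mul_div_cancel' h1]; ring
  · rw [Nat.mul_div_cancel' h1]; ring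
  · ring

end
end Atkin

/-! ### The elementary symmetric functions of the conjugates -/

namespace Atkin

noncomputable section

open MvPolynomial

/-- The complex polynomial with integral coefficients given by the `j`-th entry of a table. -/
def EC (es : List (List (ℤ × ℕ × ℕ))) (j : ℕ) : BC :=
  map (Int.castRingHom ℂ) (lpoly (es.getD j []))

lemma lpoly_map (e : List (ℤ × ℕ × ℕ)) : map (Int.castRingHom ℂ) (lpoly e) =
    (e.map fun p => C (p.1 : ℂ) * (X 0 ^ p.2.1 * X 1 ^ p.2.2)).sum := by
  rw [lpoly, map_list_sum, List.map_map]
  congr 1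
  refine List.map_congr_left fun p _ => ?_
  simp

lemma list_sum_mem_prop {M : Type*} [AddMonoid M] (p : M → Prop) (h0 : p 0)
    (ha : ∀ a b, p a → p b → p (a + b)) {ι : Type*} (g : ι → M) :
    ∀ L : List ι, (∀ x ∈ L, p (g x)) → p (L.map g).sum
  | [], _ => h0
  | x :: L, h => by
    rw [List.map_cons, List.sum_cons]
    exact ha _ _ (h x (by simp)) (list_sum_mem_prop p h0 ha g L fun y hy => h y (by simp [hy]))

lemma EC_hom {es : List (List (ℤ × ℕ × ℕ))} {w : ℕ}
    (hh : ∀ j < 13, ∀ p ∈ es.getD j [], 4 * p.2.1 + 6 * p.2.2 = w * j) {j : ℕ} (hj : j < 13) :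
    Hom (EC es j) (w * j) := by
  rw [EC, lpoly_map]
  refine list_sum_mem_prop (fun P => Hom P (w * j)) (isWeightedHomogeneous_zero ℂ wt _)
    (fun a b ha hb => ha.add hb) _ _ fun p hp => ?_
  refine hom_C_mul _ (hom_mul' (hom_pow hom_X0 p.2.1) (hom_pow hom_X1 p.2.2) ?_)
  rw [← hh j hj p hp]; ring

/-- The form `Tr k P` over `ℚ`, together with its base change to `ℂ`. -/
lemma exists_traceC {k : ℕ} {P : MvPolynomial (Fin 2) ℚ} (h : Hom P k) :
    ∃ Q : MvPolynomial (Fin 2) ℚ, Hom Q k ∧ ev ℚ Q = Tr k (ev ℚ P) ∧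
      Hom (map (algebraMap ℚ ℂ) Q) k ∧
      ev ℂ (map (algebraMap ℚ ℂ) Q) = Tr k (ev ℂ (map (algebraMap ℚ ℂ) P)) := by
  obtain ⟨Q, hQ, he⟩ := exists_trace h
  refine ⟨Q, hQ, he, ?_, ?_⟩
  · intro d hd
    rw [coeff_map] at hd
    exact hQ fun h0 => hd (by rw [h0, map_zero])
  · rw [ev_map, he, Tr_map, ev_map]

/-- Newton's identity for a table, deduced from the numerical check by Sturm's bound. The hypotheses say
that `l` lists the coefficients of the generator `X i`, that the `j`-th entry is isobaric of weight
`wt i * j`, and that the check succeeds; `Q n` is the `n`-th power sum of the conjugates. -/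
lemma newton_EC {es : List (List (ℤ × ℕ × ℕ))} {i : Fin 2} {l : List ℤ}
    (hl : Ap 67 l (ev ℤ (X i)))
    (hh : ∀ j < 13, ∀ p ∈ es.getD j [], 4 * p.2.1 + 6 * p.2.2 = wt i * j)
    (hc : ∀ j : ℕ, j < 13 → ∀ t < 7, (j : ℤ) * (leval (es.getD j [])).getD t 0 =
      (-1) ^ (j + 1) * (lnewton es (wt i) l j).getD t 0)
    {Q : ℕ → BC} (hQ : ∀ n, Hom (Q n) (wt i * n))
    (hQe : ∀ n, ev ℂ (Q n) = Tr (wt i * n) (ev ℂ (X i ^ n))) {j : ℕ} (hj : j < 13) :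
    (j : BC) * EC es j = (-1) ^ (j + 1) * ∑ a ∈ Finset.range j, (-1) ^ a * EC es a * Q (j - a) := by
  have hmul : ∀ (c : ℂ) (P : BC) (w : ℕ), Hom P w → Hom (C c * P) w := fun c P w h => hom_C_mul c h
  rw [← sub_eq_zero]
  refine sturm (w := wt i * j) (hom_sub ?_ ?_) ?_
  · rw [← map_natCast (C : ℂ →+* BC)]
    exact hmul _ _ _ (EC_hom hh hj)
  · have : ((-1) ^ (j + 1) : BC) = C ((-1) ^ (j + 1)) := by simp
    rw [this]
    refine hmul _ _ _ (IsWeightedHomogeneous.sum _ _ _ fun a ha => ?_)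
    have : ((-1) ^ a : BC) = C ((-1) ^ a) := by simp
    have haj := Finset.mem_range.1 ha
    rw [this, mul_assoc]
    refine hmul _ _ _ (hom_mul' (EC_hom hh (haj.trans hj)) (hQ _) ?_)
    rw [← mul_add, Nat.add_sub_cancel' haj.le]
  · intro t ht
    have ht7 : t < 7 := by
      have : wt i ≤ 6 := by fin_cases i <;> simp [wt]
      have := Nat.mul_le_mul this (Nat.le_of_lt_succ hj)
      omega
    have h1 := hc j hj t ht7
    rw [ap_leval _ t ht7, ap_newton es (wt i) hl j t ht7] at h1
    have key : ev ℂ ((j : BC) * EC es j -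
        (-1) ^ (j + 1) * ∑ a ∈ Finset.range j, (-1) ^ a * EC es a * Q (j - a)) =
      PowerSeries.map (Int.castRingHom ℂ) (PowerSeries.C (j : ℤ) * ev ℤ (lpoly (es.getD j [])) -
        PowerSeries.C ((-1) ^ (j + 1)) * (∑ a ∈ Finset.range j, PowerSeries.C ((-1) ^ a) *
          (ev ℤ (lpoly (es.getD a [])) * Tr (wt i * (j - a)) (ev ℤ (X i) ^ (j - a))))) := by
      simp only [map_sub, map_mul, map_sum, map_pow, map_neg, map_one, map_natCast, hQe, Tr_map, EC,
        ev_map]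
      have hX : PowerSeries.map (Int.castRingHom ℂ) (ev ℤ (X i)) = ev ℂ (X i) := by
        rw [← ev_map, map_X]
      simp only [hX, mul_assoc]
    rw [key, PowerSeries.coeff_map, map_sub, PowerSeries.coeff_C_mul, PowerSeries.coeff_C_mul, h1,
      sub_self, map_zero]

/-- A table satisfying Newton's identities gives the elementary symmetric functions of the conjugates of
the generator `X i`. -/
lemma esymm_conj {es : List (List (ℤ × ℕ × ℕ))} {i : Fin 2} {l : List ℤ}
    (hl : Ap 67 l (ev ℤ (X i))) (h0 : es.getD 0 [] = [(1, 0, 0)])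
    (hh : ∀ j < 13, ∀ p ∈ es.getD j [], 4 * p.2.1 + 6 * p.2.2 = wt i * j)
    (hc : ∀ j : ℕ, j < 13 → ∀ t < 7, (j : ℤ) * (leval (es.getD j [])).getD t 0 =
      (-1) ^ (j + 1) * (lnewton es (wt i) l j).getD t 0) (j : ℕ) : j < 13 →
    aeval (fun γ => conj γ (X i)) (esymm (Option (Fin 11)) ℂ j) = Phi (EC es j) := by
  have hX : Hom (X i : MvPolynomial (Fin 2) ℚ) (wt i) := isWeightedHomogeneous_X ℚ wt i
  choose Q hQ1 hQ2 hQ3 hQ4 using fun n : ℕ => exists_traceC (hom_pow hX n)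
  have hX' : Hom (X i : BC) (wt i) := isWeightedHomogeneous_X ℂ wt i
  have hp : ∀ n, aeval (fun γ => conj γ (X i)) (psum (Option (Fin 11)) ℂ n) =
      Phi (map (algebraMap ℚ ℂ) (Q n)) := by
    intro n
    rw [← sum_conj (hom_pow hX' n) (hQ3 n) (by rw [hQ4, map_pow, map_X]), psum, map_sum]
    refine Finset.sum_congr rfl fun γ _ => ?_
    rw [map_pow, aeval_X, map_pow]
  induction j using Nat.strong_induction_on with
  | _ j ih =>
  intro hj
  rcases Nat.eq_zero_or_pos j with rfl | hj0
  · rw [esymm_zero, map_one, EC, h0, lpoly_map]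
    simp
  have hN := congrArg (Phi : BC → ST) (newton_EC hl hh hc (Q := fun n => map (algebraMap ℚ ℂ) (Q n))
    (fun n => by rw [mul_comm]; exact hQ3 n)
    (fun n => by rw [hQ4, map_pow, map_X, mul_comm (wt i)]) hj)
  have hM := congrArg (aeval (fun γ => conj γ (X i))) (mul_esymm_eq_sum (Option (Fin 11)) ℂ j)
  have : CharZero ST := charZero_of_injective_algebraMap (algebraMap ℂ ST).injective
  have hj' : ((j : ℕ) : ST) ≠ 0 := Nat.cast_ne_zero.2 hj0.ne'
  refine mul_left_cancel₀ hj' ?_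
  rw [map_mul, map_natCast] at hN hM
  rw [hN, hM, map_mul, map_mul, map_pow, map_pow, map_neg, map_neg, map_one, map_one, map_sum,
    map_sum]
  congr 1
  rw [Finset.sum_filter, Finset.Nat.sum_antidiagonal_eq_sum_range_succ_mk, Finset.sum_range_succ]
  simp only [lt_self_iff_false, if_false, add_zero]
  refine Finset.sum_congr rfl fun a ha => ?_
  have haj := Finset.mem_range.1 ha
  rw [if_pos haj]
  simp only [map_mul, map_pow, map_neg, map_one]
  rw [ih a haj (haj.trans hj), hp]

/-- Each conjugate of a generator is a root of the degree twelve polynomial read from the table. -/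
lemma conj_root {es : List (List (ℤ × ℕ × ℕ))} {i : Fin 2} {l : List ℤ}
    (hl : Ap 67 l (ev ℤ (X i))) (h0 : es.getD 0 [] = [(1, 0, 0)])
    (hh : ∀ j < 13, ∀ p ∈ es.getD j [], 4 * p.2.1 + 6 * p.2.2 = wt i * j)
    (hc : ∀ j : ℕ, j < 13 → ∀ t < 7, (j : ℤ) * (leval (es.getD j [])).getD t 0 =
      (-1) ^ (j + 1) * (lnewton es (wt i) l j).getD t 0) (γ : Option (Fin 11)) :
    ∑ j ∈ Finset.range 13, (-1) ^ j * (Phi (EC es j) * conj γ (X i) ^ (12 - j)) = 0 := by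
  have h := Multiset.prod_X_sub_X_eq_sum_esymm
    ((Finset.univ : Finset (Option (Fin 11))).val.map fun γ => conj γ (X i))
  have hcard : Multiset.card ((Finset.univ : Finset (Option (Fin 11))).val.map
      fun γ => conj γ (X i)) = 12 := by simp
  rw [hcard, Multiset.map_map] at h
  have h2 := congrArg (Polynomial.eval (conj γ (X i))) h
  rw [Polynomial.eval_finsetSum] at h2
  have h3 : Polynomial.eval (conj γ (X i)) ((Finset.univ : Finset (Option (Fin 11))).val.map
      ((fun t => Polynomial.X - Polynomial.C t) ∘ fun γ => conj γ (X i))).prod = 0 := by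
    change Polynomial.eval _ (∏ γ, (Polynomial.X - Polynomial.C (conj γ (X i)))) = 0
    rw [Polynomial.eval_prod]
    exact Finset.prod_eq_zero (Finset.mem_univ γ) (by simp)
  rw [h3] at h2
  rw [h2]
  refine Finset.sum_congr rfl fun j hj => ?_
  rw [← esymm_conj hl h0 hh hc j (Finset.mem_range.1 hj), aeval_esymm_eq_multiset_esymm]
  simp

end
end Atkin

/-! ### Integrality with fractional slopes -/

namespace Atkin

noncomputable section

open MvPolynomial

/-- A root of a monic polynomial with integral coefficients is integral. -/
lemma isIntegralElem_of_sum {A S : Type*} [CommRing A] [CommRing S] (f : A →+* S) (a : ℕ → S)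
    (N : ℕ) (ha : ∀ j < N + 1, f.IsIntegralElem (a j)) (h0 : a 0 = 1) (x : S)
    (h : ∑ j ∈ Finset.range (N + 1), a j * x ^ (N - j) = 0) : f.IsIntegralElem x := by
  let _ := f.toAlgebra
  have ha' : ∀ j, ∃ b : integralClosure A S, j < N + 1 → (b : S) = a j := fun j => by
    by_cases hj : j < N + 1
    · exact ⟨⟨a j, ha j hj⟩, fun _ => rfl⟩
    · exact ⟨0, fun h => absurd h hj⟩
  choose b hb using ha'
  have hxint : IsIntegral (integralClosure A S) x := by
    refine ⟨Polynomial.X ^ N + ∑ j ∈ Finset.range N, Polynomial.C (b (j + 1)) *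
      Polynomial.X ^ (N - (j + 1)), ?_, ?_⟩
    · rcases Nat.eq_zero_or_pos N with rfl | hN
      · simp
      refine Polynomial.monic_X_pow_add ?_
      refine (Polynomial.degree_sum_le _ _).trans_lt ?_
      rw [Finset.sup_lt_iff (WithBot.bot_lt_coe _)]
      intro j hj
      refine (Polynomial.degree_C_mul_X_pow_le _ _).trans_lt ?_
      have := Finset.mem_range.1 hj
      exact_mod_cast (by omega : N - (j + 1) < N)
    · rw [Finset.sum_range_succ'] at h
      rw [Polynomial.eval₂_add, Polynomial.eval₂_X_pow, Polynomial.eval₂_finsetSum, ← h, h0, one_mul,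
        add_comm]
      simp only [Nat.sub_zero]
      congr 1
      refine Finset.sum_congr rfl fun j hj => ?_
      rw [Polynomial.eval₂_mul, Polynomial.eval₂_C, Polynomial.eval₂_X_pow,
        ← hb (j + 1) (by have := Finset.mem_range.1 hj; omega)]
      rfl
  exact isIntegral_trans (R := A) x hxint

lemma exists_rt : ∃ z : ℂ, z ^ 12 = 11 := IsAlgClosed.exists_pow_nat_eq 11 (by norm_num)

/-- A fixed twelfth root of `11`. It turns fractional valuations into integrality statements. -/
def rt : ℂ := exists_rt.choose
lemma rt_pow : rt ^ 12 = 11 := exists_rt.choose_spec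
lemma rt_ne : rt ≠ 0 := fun h => by have := rt_pow; rw [h] at this; norm_num at this

/-- The rescaling `X i ↦ 11 ^ (α i / 12) X i`. -/
def scale (α : Fin 2 → ℤ) : BC →ₐ[ℂ] BC := aeval fun i => C (rt ^ α i) * X i

/-- The pairing `α · m` of a vector of slopes with an exponent. -/
def dot (α : Fin 2 → ℤ) (m : Fin 2 →₀ ℕ) : ℤ := α 0 * m 0 + α 1 * m 1

lemma scale_monomial (α : Fin 2 → ℤ) (m : Fin 2 →₀ ℕ) (c : ℂ) :
    scale α (monomial m c) = monomial m (c * rt ^ dot α m) := by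
  rw [mono_eq, mono_eq, scale, map_mul, map_mul, map_pow, map_pow, aeval_X, aeval_X, aeval_C,
    dot, zpow_add₀ rt_ne, zpow_mul, zpow_mul, zpow_natCast, zpow_natCast, map_mul, map_mul, map_pow,
    map_pow, algebraMap_eq]
  ring

lemma coeff_scale (α : Fin 2 → ℤ) (P : BC) (m : Fin 2 →₀ ℕ) :
    coeff m (scale α P) = coeff m P * rt ^ dot α m := by
  induction P using MvPolynomial.monomial_add_induction_on with
  | C a =>
    rw [← monomial_zero', scale_monomial, coeff_monomial, coeff_monomial]
    split_ifs with h
    · rw [h]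
    · simp
  | monomial_add a b f ha hb ih =>
    rw [map_add, coeff_add, coeff_add, ih, scale_monomial, coeff_monomial, coeff_monomial, add_mul]
    split_ifs with h
    · rw [h]
    · simp

lemma scale_scale (α : Fin 2 → ℤ) (P : BC) : scale (-α) (scale α P) = P := by
  ext m
  rw [coeff_scale, coeff_scale, mul_assoc, ← zpow_add₀ rt_ne]
  have : dot α m + dot (-α) m = 0 := by simp only [dot, Pi.neg_apply]; ring
  rw [this, zpow_zero, mul_one]

/-- The evaluation `X i ↦ 11 ^ (-α i / 12) Phi (X i)`. -/
def psi (α : Fin 2 → ℤ) : BC →ₐ[ℂ] ST := Phi.comp (scale (-α))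

lemma psi_scale (α : Fin 2 → ℤ) (P : BC) : psi α (scale α P) = Phi P := by
  rw [psi, AlgHom.comp_apply, scale_scale]

lemma psi_injective (α : Fin 2 → ℤ) : Function.Injective (psi α) := by
  refine Phi_injective.comp ?_
  intro P Q h
  have : scale (- -α) (scale (-α) P) = scale (- -α) (scale (-α) Q) := congrArg (scale (- -α)) h
  rwa [scale_scale, scale_scale] at this

/-- The restriction of `psi α` to polynomials with integer coefficients. Its image is the ring
`ℤ[11 ^ (-α 0 / 12) E₄, 11 ^ (-α 1 / 12) E₆]`. -/
def psiZ (α : Fin 2 → ℤ) : MvPolynomial (Fin 2) ℤ →+* ST :=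
  (psi α : BC →+* ST).comp (map (Int.castRingHom ℂ))

/-- Integrality over the image of `psiZ α` is coefficientwise, since a polynomial is integral over
`ℤ[X, Y]` exactly if its coefficients are algebraic integers. -/
lemma isIntegralElem_psi (α : Fin 2 → ℤ) (P : BC) :
    (psiZ α).IsIntegralElem (psi α P) ↔ ∀ n, IsIntegral ℤ (coeff n P) := by
  rw [← MvPolynomial.isIntegral_iff_isIntegral_coeff]
  change _ ↔ (map (Int.castRingHom ℂ)).IsIntegralElem P
  constructor
  · rintro ⟨p, hp, h⟩
    refine ⟨p, hp, psi_injective α ?_⟩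
    rw [map_zero, ← h, psiZ]
    exact Polynomial.hom_eval₂ p _ (psi α : BC →+* ST) P
  · rintro ⟨p, hp, h⟩
    refine ⟨p, hp, ?_⟩
    have := Polynomial.hom_eval₂ p (map (Int.castRingHom ℂ)) (psi α : BC →+* ST) P
    rw [h, map_zero] at this
    exact this.symm

end
end Atkin

/-! ### Integrality of the conjugates and of traces -/

namespace Atkin

noncomputable section

open MvPolynomial

/-- An integer of valuation at least `(u - v) / 12`, times `11 ^ ((v - u) / 12)`, is an algebraic
integer. -/
lemma isIntegral_mul_rt {c : ℤ} {u v : ℕ} (h : (11 : ℤ) ^ u ∣ c ^ 12 * 11 ^ v) :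
    IsIntegral ℤ ((c : ℂ) * rt ^ ((v : ℤ) - u)) := by
  refine IsIntegral.of_pow (n := 12) (by norm_num) ?_
  obtain ⟨d, hd⟩ := h
  have : ((c : ℂ) * rt ^ ((v : ℤ) - u)) ^ 12 = (d : ℤ) := by
    have h11 : ((11 : ℂ) ^ u) ≠ 0 := pow_ne_zero _ (by norm_num)
    rw [mul_pow, ← zpow_natCast, ← zpow_natCast (rt ^ _), ← zpow_mul, mul_comm _ ((12 : ℕ) : ℤ), zpow_mul,
      zpow_natCast, zpow_natCast, rt_pow, zpow_sub₀ (by norm_num), zpow_natCast, zpow_natCast,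
      ← mul_div_assoc, div_eq_iff h11]
    rw [mul_comm, mul_comm (11 ^ u)] at hd
    rw [mul_comm]
    exact_mod_cast hd
  rw [this]
  exact isIntegral_algebraMap (R := ℤ) (A := ℂ) (x := d)

/-- The slopes of the table bound the conjugates: under the divisibility `hb`, each conjugate of `X i`
divided by `11 ^ (A / 12)` is integral over `ℤ[11 ^ (-a / 12) E₄, 11 ^ (-b / 12) E₆]`. The other
hypotheses are those of `newton_EC`. -/
lemma conj_integral {es : List (List (ℤ × ℕ × ℕ))} {i : Fin 2} {l : List ℤ}
    (hl : Ap 67 l (ev ℤ (X i))) (h0 : es.getD 0 [] = [(1, 0, 0)])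
    (hh : ∀ j < 13, ∀ p ∈ es.getD j [], 4 * p.2.1 + 6 * p.2.2 = wt i * j)
    (hc : ∀ j : ℕ, j < 13 → ∀ t < 7, (j : ℤ) * (leval (es.getD j [])).getD t 0 =
      (-1) ^ (j + 1) * (lnewton es (wt i) l j).getD t 0)
    {a b A : ℕ} (hb : ∀ j < 13, ∀ p ∈ es.getD j [],
      (11 : ℤ) ^ (A * j) ∣ p.1 ^ 12 * 11 ^ (a * p.2.1 + b * p.2.2)) (γ : Option (Fin 11)) :
    (psiZ ![(a : ℤ), b]).IsIntegralElem (rt ^ (-(A : ℤ)) • conj γ (X i)) := by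
  have key : ∀ j : ℕ, j < 12 + 1 → ∀ n, IsIntegral ℤ (coeff n
      ((-1) ^ j * C (rt ^ (-(A * j : ℤ))) * scale ![(a : ℤ), b] (EC es j))) := by
    intro j hj n
    have h1 : ((-1) ^ j * C (rt ^ (-(A * j : ℤ))) * scale ![(a : ℤ), b] (EC es j)) =
        C ((-1) ^ j) * (C (rt ^ (-(A * j : ℤ))) * scale ![(a : ℤ), b] (EC es j)) := by
      simp [mul_assoc]
    rw [h1, coeff_C_mul]
    refine IsIntegral.mul (isIntegral_one.neg.pow _) ?_
    rw [EC, lpoly_map, map_list_sum, List.map_map, ← List.sum_map_mul_left]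
    refine list_sum_mem_prop (fun P : BC => IsIntegral ℤ (coeff n P)) (by simp [isIntegral_zero])
      (fun P Q hP hQ => by rw [coeff_add]; exact hP.add hQ) _ _ fun p hp => ?_
    have hm : (C (p.1 : ℂ) * (X 0 ^ p.2.1 * X 1 ^ p.2.2) : BC) =
        monomial (Finsupp.single 0 p.2.1 + Finsupp.single 1 p.2.2) (p.1 : ℂ) := by
      rw [mono_eq (K := ℂ)]; simp
    rw [Function.comp_apply, hm, scale_monomial, C_mul_monomial, coeff_monomial]
    split_ifs with h
    · convert isIntegral_mul_rt (hb j hj p hp) using 1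
      rw [mul_left_comm, ← zpow_add₀ rt_ne]
      congr 2
      simp [dot]
      ring
    · exact isIntegral_zero
  refine isIntegralElem_of_sum _ (fun j => psi ![(a : ℤ), b]
      ((-1) ^ j * C (rt ^ (-(A * j : ℤ))) * scale ![(a : ℤ), b] (EC es j))) 12
    (fun j hj => (isIntegralElem_psi _ _).2 (key j hj)) ?_ _ ?_
  · have h1 : EC es 0 = 1 := by rw [EC, h0, lpoly_map]; simp
    simp [h1]
  · have h := conj_root hl h0 hh hc γ
    have h2 := congrArg (fun z => rt ^ (-(A * 12 : ℤ)) • z) h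
    simp only [smul_zero, Finset.smul_sum] at h2
    rw [← h2]
    refine Finset.sum_congr rfl fun j hj => ?_
    have hj := Finset.mem_range.1 hj
    have e1 : psi ![(a : ℤ), b] ((-1) ^ j * C (rt ^ (-(A * j : ℤ))) * scale ![(a : ℤ), b] (EC es j)) =
        rt ^ (-(A * j : ℤ)) • ((-1) ^ j * Phi (EC es j)) := by
      rw [map_mul, map_mul, psi_scale, ← algebraMap_eq, AlgHom.commutes, Algebra.smul_def, map_pow,
        map_neg, map_one]
      ring
    rw [e1, smul_pow, smul_mul_smul_comm, ← zpow_natCast, ← zpow_mul, ← zpow_add₀ rt_ne, mul_assoc]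
    congr 2
    rw [Nat.cast_sub (by omega)]
    push_cast
    ring

/-- If the conjugates of the generators divided by `11 ^ (A i / 12)` are integral for the slopes `α`, then
the coefficient of `X ^ n` in the trace of `X ^ m` has valuation at least `(A · m - α · n) / 12`. -/
lemma trace_integral {α A : Fin 2 → ℤ}
    (hx : ∀ i γ, (psiZ α).IsIntegralElem (rt ^ (-A i) • conj γ (X i)))
    {m : Fin 2 →₀ ℕ} {Q : BC} (hQ : Hom Q (Finsupp.weight wt m))
    (he : ev ℂ Q = Tr (Finsupp.weight wt m) (ev ℂ (monomial m 1))) (n : Fin 2 →₀ ℕ) :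
    IsIntegral ℤ (coeff n Q * rt ^ (dot α n - dot A m)) := by
  have h1 := sum_conj (isWeightedHomogeneous_monomial wt m (1 : ℂ) rfl) hQ he
  have h2 : psi α (C (rt ^ (-dot A m)) * scale α Q) = ∑ γ : Option (Fin 11),
      (rt ^ (-A 0) • conj γ (X 0)) ^ m 0 * (rt ^ (-A 1) • conj γ (X 1)) ^ m 1 := by
    rw [map_mul, psi_scale, ← h1, Finset.mul_sum]
    refine Finset.sum_congr rfl fun γ _ => ?_
    rw [mono_eq, ← algebraMap_eq, AlgHom.commutes, map_one, one_mul, map_mul, map_pow, map_pow,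
      smul_pow, smul_pow, smul_mul_smul_comm, ← zpow_natCast, ← zpow_natCast, ← zpow_mul,
      ← zpow_mul, ← zpow_add₀ rt_ne, Algebra.smul_def, dot]
    congr 3
    ring
  have h3 : (psiZ α).IsIntegralElem (psi α (C (rt ^ (-dot A m)) * scale α Q)) := by
    rw [h2]
    let _ := (psiZ α).toAlgebra
    exact IsIntegral.sum (R := MvPolynomial (Fin 2) ℤ) _ fun γ _ =>
      IsIntegral.mul (IsIntegral.pow (hx 0 γ) _) (IsIntegral.pow (hx 1 γ) _)
  have h4 := (isIntegralElem_psi _ _).1 h3 n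
  rw [coeff_C_mul, coeff_scale, mul_left_comm, ← zpow_add₀ rt_ne] at h4
  convert h4 using 3
  ring

lemma hom_check : (∀ j < 13, ∀ p ∈ esymE4.getD j [], 4 * p.2.1 + 6 * p.2.2 = 4 * j) ∧
    ∀ j < 13, ∀ p ∈ esymE6.getD j [], 4 * p.2.1 + 6 * p.2.2 = 6 * j := by decide +kernel

lemma bound_check4 : (∀ j < 13, ∀ p ∈ esymE4.getD j [],
      (11 : ℤ) ^ (5 * j) ∣ p.1 ^ 12 * 11 ^ (11 * p.2.1 + 0 * p.2.2)) ∧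
    ∀ j < 13, ∀ p ∈ esymE4.getD j [],
      (11 : ℤ) ^ (4 * j) ∣ p.1 ^ 12 * 11 ^ (0 * p.2.1 + 11 * p.2.2) := by decide +kernel

lemma bound_check6 : (∀ j < 13, ∀ p ∈ esymE6.getD j [],
      (11 : ℤ) ^ (6 * j) ∣ p.1 ^ 12 * 11 ^ (11 * p.2.1 + 0 * p.2.2)) ∧
    ∀ j < 13, ∀ p ∈ esymE6.getD j [],
      (11 : ℤ) ^ (7 * j) ∣ p.1 ^ 12 * 11 ^ (0 * p.2.1 + 11 * p.2.2) := by decide +kernel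

lemma ap4 : Ap 67 listE4 (ev ℤ (X 0)) := by simpa [ev] using ap_listE4
lemma ap6 : Ap 67 listE6 (ev ℤ (X 1)) := by simpa [ev] using ap_listE6

/-- The conjugates of `E₄` and `E₆`, divided by `11 ^ (5 / 12)` and `11 ^ (6 / 12)`, are integral over
`ℤ[11 ^ (-11 / 12) E₄, E₆]`. -/
lemma conj_integral_a (i : Fin 2) (γ : Option (Fin 11)) :
    (psiZ ![11, 0]).IsIntegralElem (rt ^ (-(![5, 6] : Fin 2 → ℤ) i) • conj γ (X i)) := by
  fin_cases i
  · exact conj_integral ap4 rfl hom_check.1 newton_check4 bound_check4.1 γ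
  · exact conj_integral ap6 rfl hom_check.2 newton_check6 bound_check6.1 γ

/-- The conjugates of `E₄` and `E₆`, divided by `11 ^ (4 / 12)` and `11 ^ (7 / 12)`, are integral over
`ℤ[E₄, 11 ^ (-11 / 12) E₆]`. -/
lemma conj_integral_b (i : Fin 2) (γ : Option (Fin 11)) :
    (psiZ ![0, 11]).IsIntegralElem (rt ^ (-(![4, 7] : Fin 2 → ℤ) i) • conj γ (X i)) := by
  fin_cases i
  · exact conj_integral ap4 rfl hom_check.1 newton_check4 bound_check4.2 γ
  · exact conj_integral ap6 rfl hom_check.2 newton_check6 bound_check6.2 γ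

end
end Atkin

/-! ### The lattices and the action of the trace -/

namespace Atkin

noncomputable section

open MvPolynomial

/-- The rational number `c` has `11`-adic valuation at least `r / 12`. -/
def D (r : ℤ) (c : ℚ) : Prop := padicNorm 11 c ^ 12 ≤ (11 : ℚ) ^ (-r)

instance : Fact (Nat.Prime 11) := ⟨by norm_num⟩

lemma D.mono {r s : ℤ} {c : ℚ} (h : D r c) (hs : s ≤ r) : D s c :=
  le_trans h (zpow_le_zpow_right₀ (by norm_num) (by omega))

lemma D_zero (r : ℤ) : D r 0 := by
  rw [D, padicNorm.zero, zero_pow (by norm_num)]; positivity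

lemma D.add {r : ℤ} {a b : ℚ} (ha : D r a) (hb : D r b) : D r (a + b) := by
  rcases le_max_iff.1 (padicNorm.nonarchimedean (p := 11) (q := a) (r := b)) with h | h
  · exact (pow_le_pow_left₀ (padicNorm.nonneg _) h 12).trans ha
  · exact (pow_le_pow_left₀ (padicNorm.nonneg _) h 12).trans hb

lemma D.neg {r : ℤ} {a : ℚ} (ha : D r a) : D r (-a) := by rwa [D, padicNorm.neg]

lemma D.sub {r : ℤ} {a b : ℚ} (ha : D r a) (hb : D r b) : D r (a - b) := by
  rw [sub_eq_add_neg]; exact ha.add hb.neg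

lemma D.mul {r s : ℤ} {a b : ℚ} (ha : D r a) (hb : D s b) : D (r + s) (a * b) := by
  rw [D, padicNorm.mul, mul_pow, neg_add, zpow_add₀ (by norm_num)]
  exact mul_le_mul ha hb (pow_nonneg (padicNorm.nonneg _) _) (by positivity)

lemma D.sum {r : ℤ} {ι : Type*} (s : Finset ι) {f : ι → ℚ} (h : ∀ i ∈ s, D r (f i)) :
    D r (∑ i ∈ s, f i) := Finset.sum_induction f (D r) (fun _ _ => D.add) (D_zero r) h

lemma D_int (z : ℤ) : D 0 z := by
  rw [D, neg_zero, zpow_zero]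
  exact pow_le_one₀ (padicNorm.nonneg _) (padicNorm.of_int z)

lemma norm_eleven : padicNorm 11 (11 : ℚ) = 11⁻¹ := by
  have := padicNorm.padicNorm_p_of_prime (p := 11)
  exact_mod_cast this

lemma D_eleven {r : ℤ} {c : ℚ} : D (r + 12) (11 * c) ↔ D r c := by
  rw [D, D, padicNorm.mul, norm_eleven, mul_pow, neg_add, zpow_add₀ (by norm_num), mul_comm]
  have : ((11 : ℚ)⁻¹) ^ 12 = 11 ^ (-12 : ℤ) := by norm_num
  rw [this]
  exact mul_le_mul_iff_left₀ (by positivity)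

/-- If `c 11 ^ (z / 12)` is an algebraic integer, then `c` has valuation at least `-z / 12`. -/
lemma D.of_integral {c : ℚ} {z : ℤ} (h : IsIntegral ℤ ((algebraMap ℚ ℂ c) * rt ^ z)) : D (-z) c := by
  have h1 := h.pow 12
  have h2 : ((algebraMap ℚ ℂ c) * rt ^ z) ^ 12 = algebraMap ℚ ℂ (c ^ 12 * 11 ^ z) := by
    rw [mul_pow, ← zpow_natCast (rt ^ z), ← zpow_mul, mul_comm z, zpow_mul, zpow_natCast, rt_pow,
      map_mul, map_pow, map_zpow₀, map_ofNat]
  rw [h2, isIntegral_algebraMap_iff (algebraMap ℚ ℂ).injective] at h1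
  obtain ⟨d, hd⟩ := IsIntegrallyClosed.isIntegral_iff.1 h1
  have h3 : padicNorm 11 (c ^ 12 * 11 ^ z) ≤ 1 := by
    rw [← hd]; exact padicNorm.of_int d
  let v := IsAbsoluteValue.toAbsoluteValue (padicNorm 11)
  have h4 : v c ^ 12 * v 11 ^ z ≤ 1 := by rw [← map_pow, ← map_zpow₀, ← map_mul]; exact h3
  have h5 : v 11 = 11⁻¹ := norm_eleven
  rw [h5, inv_zpow, ← div_eq_mul_inv, div_le_one (by positivity)] at h4
  rw [D, neg_neg]
  exact h4

/-- Valuations are integers, so a lower bound larger than `n - 1` can be rounded up to `n`. -/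
lemma D.round {r n : ℤ} {c : ℚ} (h : D r c) (hr : 12 * (n - 1) < r) : D (12 * n) c := by
  by_cases hc : c = 0
  · rw [hc]; exact D_zero _
  rw [D, padicNorm.eq_zpow_of_nonzero hc] at h ⊢
  push_cast at h ⊢
  rw [← zpow_natCast, ← zpow_mul, zpow_le_zpow_iff_right₀ (by norm_num)] at h ⊢
  push_cast at *
  omega

/-- The coefficient of `X ^ m` has valuation at least `(r - α · m) / 12`. -/
def W (α : Fin 2 → ℤ) (r : ℤ) (P : MvPolynomial (Fin 2) ℚ) : Prop :=
  ∀ m, D (r - dot α m) (coeff m P)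

lemma dot_add (α : Fin 2 → ℤ) (m n : Fin 2 →₀ ℕ) : dot α (m + n) = dot α m + dot α n := by
  simp only [dot, Finsupp.add_apply]; push_cast; ring

lemma W.mul {α : Fin 2 → ℤ} {r s : ℤ} {P Q : MvPolynomial (Fin 2) ℚ} (hP : W α r P) (hQ : W α s Q) :
    W α (r + s) (P * Q) := by
  intro m
  rw [coeff_mul]
  refine D.sum _ fun p hp => ?_
  have := Finset.HasAntidiagonal.mem_antidiagonal.1 hp
  refine ((hP p.1).mul (hQ p.2)).mono ?_
  rw [← this, dot_add]; omega

lemma W_one (α : Fin 2 → ℤ) : W α 0 1 := by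
  intro m
  rw [coeff_one]
  split_ifs with h
  · rw [← h]; simpa [dot] using D_int 1
  · exact D_zero _

lemma W.pow {α : Fin 2 → ℤ} {r : ℤ} {P : MvPolynomial (Fin 2) ℚ} (hP : W α r P) (n : ℕ) :
    W α (n * r) (P ^ n) := by
  induction n with
  | zero => simpa using W_one α
  | succ n ih =>
    rw [pow_succ]
    have := ih.mul hP
    rwa [show ((n + 1 : ℕ) : ℤ) * r = n * r + r by push_cast; ring]

lemma X0_pow_eq_mono (n : ℕ) : (X 0 ^ n : MvPolynomial (Fin 2) ℚ) = monomial (Finsupp.single 0 n) 1 :=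
  X_pow_eq_monomial
lemma X1_pow_eq_mono (n : ℕ) : (X 1 ^ n : MvPolynomial (Fin 2) ℚ) = monomial (Finsupp.single 1 n) 1 :=
  X_pow_eq_monomial

lemma W_del {α : Fin 2 → ℤ} (h0 : 12 ≤ 3 * α 0) (h1 : 12 ≤ 2 * α 1) : W α 12 (del ℚ) := by
  intro m
  rw [del, coeff_sub, X0_pow_eq_mono, X1_pow_eq_mono, coeff_monomial, coeff_monomial]
  refine D.sub ?_ ?_
  · split_ifs with h
    · rw [← h]
      exact (D_int 1).mono (by simp [dot]; omega)
    · exact D_zero _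
  · split_ifs with h
    · rw [← h]
      exact (D_int 1).mono (by simp [dot]; omega)
    · exact D_zero _

/-- Division by `del` preserves the lattice: compare coefficients, by induction on the exponent of `X 0`. -/
lemma W_of_del_mul_a {r : ℤ} {Q : MvPolynomial (Fin 2) ℚ} (h : W ![11, 0] r (del ℚ * Q)) :
    W ![11, 0] r Q := by
  intro m
  induction hn : m 0 using Nat.strong_induction_on generalizing m with
  | _ n ih =>
  have h1 := h (Finsupp.single 1 2 + m)
  rw [del, sub_mul, coeff_sub, X0_pow_eq_mono, X1_pow_eq_mono, coeff_monomial_mul, one_mul,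
    coeff_monomial_mul'] at h1
  have h2 : D (r - dot ![11, 0] m) (if Finsupp.single 0 3 ≤ Finsupp.single 1 2 + m then
      1 * coeff (Finsupp.single 1 2 + m - Finsupp.single 0 3) Q else 0) := by
    split_ifs with hle
    · have h3 : 3 ≤ m 0 := by simpa using hle 0
      rw [one_mul]
      refine (ih (m 0 - 3) (by omega) _ (by simp)).mono ?_
      simp [dot]
      omega
    · exact D_zero _
  have h4 := h2.sub (h1.mono (s := r - dot ![11, 0] m) (by rw [dot_add]; simp [dot]))
  rwa [sub_sub_cancel] at h4

/-- Division by `del` preserves the lattice: compare coefficients, by induction on the exponent of `X 1`. -/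
lemma W_of_del_mul_b {r : ℤ} {Q : MvPolynomial (Fin 2) ℚ} (h : W ![0, 11] r (del ℚ * Q)) :
    W ![0, 11] r Q := by
  intro m
  induction hn : m 1 using Nat.strong_induction_on generalizing m with
  | _ n ih =>
  have h1 := h (Finsupp.single 0 3 + m)
  rw [del, sub_mul, coeff_sub, X0_pow_eq_mono, X1_pow_eq_mono, coeff_monomial_mul, one_mul,
    coeff_monomial_mul'] at h1
  have h2 : D (r - dot ![0, 11] m) (if Finsupp.single 1 2 ≤ Finsupp.single 0 3 + m then
      1 * coeff (Finsupp.single 0 3 + m - Finsupp.single 1 2) Q else 0) := by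
    split_ifs with hle
    · have h3 : 2 ≤ m 1 := by simpa using hle 1
      rw [one_mul]
      refine (ih (m 1 - 2) (by omega) _ (by simp)).mono ?_
      simp [dot]
      omega
    · exact D_zero _
  have h4 := h2.add (h1.mono (s := r - dot ![0, 11] m) (by rw [dot_add]; simp [dot]))
  rwa [add_sub_cancel] at h4

lemma W_of_del_pow_mul_a {r : ℤ} {Q : MvPolynomial (Fin 2) ℚ} (s : ℕ)
    (h : W ![11, 0] r (del ℚ ^ s * Q)) : W ![11, 0] r Q := by
  induction s with
  | zero => simpa using h
  | succ s ih => rw [pow_succ', mul_assoc] at h; exact ih (W_of_del_mul_a h)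

lemma W_of_del_pow_mul_b {r : ℤ} {Q : MvPolynomial (Fin 2) ℚ} (s : ℕ)
    (h : W ![0, 11] r (del ℚ ^ s * Q)) : W ![0, 11] r Q := by
  induction s with
  | zero => simpa using h
  | succ s ih => rw [pow_succ', mul_assoc] at h; exact ih (W_of_del_mul_b h)

/-- `Tr w` as a linear map. -/
def TrL (w : ℕ) : PowerSeries ℚ →ₗ[ℚ] PowerSeries ℚ :=
  (11 : ℚ) • U + (11 ^ w : ℚ) • (V : PowerSeries ℚ →ₐ[ℚ] PowerSeries ℚ).toLinearMap

lemma TrL_apply (w : ℕ) (φ : PowerSeries ℚ) : TrL w φ = Tr w φ := rfl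

/-- The trace carries the lattice of slopes `A` to the lattice of slopes `α`. -/
lemma W_trace {α A : Fin 2 → ℤ}
    (hx : ∀ i γ, (psiZ α).IsIntegralElem (rt ^ (-A i) • conj γ (X i)))
    {w : ℕ} {P Q : MvPolynomial (Fin 2) ℚ} (hP : Hom P w) (hQ : Hom Q w)
    (he : ev ℚ Q = Tr w (ev ℚ P)) {r : ℤ} (h : W A r P) : W α r Q := by
  choose T hT1 hT2 hT3 hT4 using fun m : Fin 2 →₀ ℕ =>
    exists_traceC (isWeightedHomogeneous_monomial wt m (1 : ℚ) rfl)
  have hD : ∀ m n, D (dot A m - dot α n) (coeff n (T m)) := fun m n => by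
    have := trace_integral hx (hT3 m) (by rw [hT4, map_monomial, map_one]) n
    rw [coeff_map] at this
    have := D.of_integral this
    rwa [neg_sub] at this
  have hQs : Q = ∑ m ∈ P.support, C (coeff m P) * T m := by
    refine ev_injOn hQ (IsWeightedHomogeneous.sum _ _ _ fun m hm => ?_) ?_
    · rw [← hP (mem_support_iff.1 hm)]; exact hom_C_mul _ (hT1 m)
    · rw [he, ← TrL_apply]
      conv_lhs => rw [P.as_sum]
      rw [map_sum, map_sum, map_sum]
      refine Finset.sum_congr rfl fun m hm => ?_
      have h1 : monomial m (coeff m P) = coeff m P • monomial m (1 : ℚ) := by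
        rw [smul_monomial, smul_eq_mul, mul_one]
      rw [h1, ← smul_eq_C_mul, map_smul, map_smul, map_smul, hT2, TrL_apply,
        hP (mem_support_iff.1 hm)]
  intro n
  rw [hQs, coeff_sum]
  refine D.sum _ fun m _ => ?_
  rw [coeff_C_mul]
  exact ((h m).mul (hD m n)).mono (by omega)

end
end Atkin

/-! ### The steps of the descent -/

namespace Atkin

noncomputable section

open MvPolynomial

/-- Cusp forms of weight `10 * K` for which the coefficient of `E₄ ^ (K + 3 d) E₆ ^ (K - 2 d)` has
valuation at least `n + max |d| 1`. Every monomial of this weight is of this shape. -/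
def Lat (K : ℕ) (n : ℤ) (P : MvPolynomial (Fin 2) ℚ) : Prop :=
  Hom P (10 * K) ∧ PowerSeries.coeff 0 (ev ℚ P) = 0 ∧
    ∀ (d : ℤ) (m : Fin 2 →₀ ℕ), (m 0 : ℤ) = K + 3 * d → (m 1 : ℤ) = K - 2 * d →
      D (12 * (n + max |d| 1)) (coeff m P)

lemma exists_index {K : ℕ} {P : MvPolynomial (Fin 2) ℚ} (h : Hom P (10 * K)) {m : Fin 2 →₀ ℕ}
    (hm : coeff m P ≠ 0) : ∃ d : ℤ, (m 0 : ℤ) = K + 3 * d ∧ (m 1 : ℤ) = K - 2 * d := by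
  have := hom_weight h hm
  exact ⟨((K : ℤ) - m 1) / 2, by omega, by omega⟩

lemma W_of_index {K : ℕ} {P : MvPolynomial (Fin 2) ℚ} (h : Hom P (10 * K)) {α : Fin 2 → ℤ} {r : ℤ}
    (hd : ∀ (d : ℤ) (m : Fin 2 →₀ ℕ), (m 0 : ℤ) = K + 3 * d → (m 1 : ℤ) = K - 2 * d →
      D (r - dot α m) (coeff m P)) : W α r P := by
  intro m
  by_cases hm : coeff m P = 0
  · rw [hm]; exact D_zero _
  · obtain ⟨d, h0, h1⟩ := exists_index h hm
    exact hd d m h0 h1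

lemma Lat.W_a {K : ℕ} {n : ℤ} {P : MvPolynomial (Fin 2) ℚ} (h : Lat K n P) :
    W ![5, 6] (11 * K + 9 + 12 * n) P := by
  refine W_of_index h.1 fun d m h0 h1 => (h.2.2 d m h0 h1).mono ?_
  simp only [dot, Matrix.cons_val_zero, Matrix.cons_val_one, h0, h1]
  rcases abs_cases d with ⟨h, _⟩ | ⟨h, _⟩ <;> rw [h] <;> omega

lemma Lat.W_b {K : ℕ} {n : ℤ} {P : MvPolynomial (Fin 2) ℚ} (h : Lat K n P) :
    W ![4, 7] (11 * K + 10 + 12 * n) P := by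
  refine W_of_index h.1 fun d m h0 h1 => (h.2.2 d m h0 h1).mono ?_
  simp only [dot, Matrix.cons_val_zero, Matrix.cons_val_one, h0, h1]
  rcases abs_cases d with ⟨h, _⟩ | ⟨h, _⟩ <;> rw [h] <;> omega

/-- The two slope conditions control the coefficients with `d < 0` and `d > 0` respectively, after
rounding. The coefficient with `d = 0` is minus the sum of the others, as the constant term vanishes. -/
lemma lat_of_W {K : ℕ} {n r₀ r₁ : ℤ} {P : MvPolynomial (Fin 2) ℚ} (h : Hom P (10 * K))
    (hc : PowerSeries.coeff 0 (ev ℚ P) = 0) (ha : W ![11, 0] (11 * K + r₀ + 12 * n) P)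
    (hb : W ![0, 11] (11 * K + r₁ + 12 * n) P) (hr₀ : 3 ≤ r₀) (hr₁ : 4 ≤ r₁) : Lat K (n + 2) P := by
  have key : ∀ (d : ℤ) (m : Fin 2 →₀ ℕ), d ≠ 0 → (m 0 : ℤ) = K + 3 * d → (m 1 : ℤ) = K - 2 * d →
      D (12 * (n + 2 + |d|)) (coeff m P) := by
    intro d m hd h0 h1
    rcases lt_or_gt_of_ne hd with h | h
    · have := ha m
      simp only [dot, Matrix.cons_val_zero, Matrix.cons_val_one, h0, h1] at this
      refine this.round ?_
      rw [abs_of_neg h]; omega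
    · have := hb m
      simp only [dot, Matrix.cons_val_zero, Matrix.cons_val_one, h0, h1] at this
      refine this.round ?_
      rw [abs_of_pos h]; omega
  refine ⟨h, hc, fun d m h0 h1 => ?_⟩
  by_cases hd : d = 0
  · subst hd
    rw [constCoeff_ev, eval_eq] at hc
    simp only [one_pow, Finset.prod_const_one, mul_one] at hc
    have hs : coeff m P = -∑ m' ∈ P.support.erase m, coeff m' P := by
      by_cases hm : m ∈ P.support
      · rw [← Finset.add_sum_erase _ _ hm] at hc
        linarith
      · rw [Finset.erase_eq_of_notMem hm, hc, neg_zero, notMem_support_iff.1 hm]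
    rw [hs]
    refine D.neg (D.sum _ fun m' hm' => ?_)
    rw [Finset.mem_erase, mem_support_iff] at hm'
    obtain ⟨d', h0', h1'⟩ := exists_index h hm'.2
    have hd' : d' ≠ 0 := by
      rintro rfl
      apply hm'.1
      ext i
      fin_cases i
      · change m' 0 = m 0
        omega
      · change m' 1 = m 1
        omega
    refine (key d' m' hd' h0' h1').mono ?_
    have := Int.one_le_abs hd'
    rw [abs_zero, max_eq_right zero_le_one]
    omega
  · rw [max_eq_left (Int.one_le_abs hd)]
    exact key d m hd h0 h1

/-- The Hecke operator of index `11` in weight `w`, on `q`-expansions. -/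
def T {R : Type*} [CommRing R] (w : ℕ) (φ : PowerSeries R) : PowerSeries R :=
  U φ + (11 ^ (w - 1) : R) • V φ

lemma Tr_eq_T {w : ℕ} (hw : 0 < w) (φ : PowerSeries ℚ) : Tr w φ = (11 : ℚ) • T w φ := by
  obtain ⟨w, rfl⟩ := Nat.exists_eq_succ_of_ne_zero hw.ne'
  rw [T, Tr, smul_add, smul_smul, Nat.succ_eq_add_one, pow_succ', Nat.add_sub_cancel]

/-- The common part of the steps of the descent: apply the trace to `P`, divide by `del ^ m`, which is
possible by the order of vanishing, and cancel the factor `11` by which `Tr` exceeds `T`. The source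
lattice at level `n` is sent to `Lat` at level `n + 2`, hence to level `n + 1` after cancelling. -/
lemma step_aux {m w K' : ℕ} {n r₀ r₁ : ℤ} {P : MvPolynomial (Fin 2) ℚ} (hw : 0 < w)
    (hP : Hom P w) (hK : w = 12 * m + 10 * K')
    (hord : ∀ i ≤ 11 * m, PowerSeries.coeff i (ev ℚ P) = 0)
    (ha : W ![5, 6] (11 * K' + r₀ + 12 * n) P)
    (hb : W ![4, 7] (11 * K' + r₁ + 12 * n) P) (hr₀ : 3 ≤ r₀) (hr₁ : 4 ≤ r₁) :
    ∃ G, Lat K' (n + 1) G ∧ ev ℚ (del ℚ ^ m * G) = T w (ev ℚ P) := by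
  obtain ⟨Q, hQ, he⟩ := exists_trace hP
  have hz : ∀ i ≤ m, PowerSeries.coeff i (ev ℚ Q) = 0 := by
    intro i hi
    rw [he, coeff_Tr, hord _ (by omega)]
    split_ifs
    · rw [hord _ (by omega)]; ring
    · ring
  obtain ⟨G, hG, rfl⟩ := del_pow_dvd (K := ℚ) m (w := 10 * K') (P := Q)
    (by rwa [add_comm, ← hK]) (fun i hi => hz i hi.le)
  have h0 := hz m le_rfl
  rw [coeff_ev_del_eq] at h0
  have hL := lat_of_W hG ((mul_eq_zero.1 h0).resolve_left (pow_ne_zero _ (by norm_num)))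
    (W_of_del_pow_mul_a m (W_trace conj_integral_a hP hQ he ha))
    (W_of_del_pow_mul_b m (W_trace conj_integral_b hP hQ he hb)) hr₀ hr₁
  refine ⟨C (11⁻¹) * G, ⟨hom_C_mul _ hG, ?_, ?_⟩, ?_⟩
  · rw [← smul_eq_C_mul, map_smul, PowerSeries.coeff_smul, hL.2.1, smul_zero]
  · intro d k h0 h1
    rw [coeff_C_mul, ← D_eleven, mul_inv_cancel_left₀ (by norm_num)]
    exact (hL.2.2 d k h0 h1).mono (by omega)
  · rw [mul_left_comm, ← smul_eq_C_mul, map_smul, he, Tr_eq_T hw, smul_smul,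
      inv_mul_cancel₀ (by norm_num), one_smul]

lemma hom_del_mul {s w : ℕ} {G : MvPolynomial (Fin 2) ℚ} (h : Hom G w) :
    Hom (del ℚ ^ s * G) (12 * s + w) :=
  hom_mul' (hom_pow hom_del s) h (by ring)

lemma W_del_a : W ![5, 6] 12 (del ℚ) := W_del (by simp) (by simp)
lemma W_del_b : W ![4, 7] 12 (del ℚ) := W_del (by simp) (by simp)

lemma W.cast {α : Fin 2 → ℤ} {r s : ℤ} {P : MvPolynomial (Fin 2) ℚ} (h : W α r P) (hr : r = s) :
    W α s P := hr ▸ h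

lemma Lat.order {K s : ℕ} {n : ℤ} {G : MvPolynomial (Fin 2) ℚ} (h : Lat K n G) {i : ℕ}
    (hi : i ≤ s) : PowerSeries.coeff i (ev ℚ (del ℚ ^ s * G)) = 0 := by
  rcases hi.lt_or_eq with h1 | rfl
  · exact coeff_ev_del_lt _ _ _ h1
  · rw [coeff_ev_del_eq, h.2.1, mul_zero]

/-- The step from `del ^ (11 m) * G` to `del ^ m * G'`. -/
lemma step_even {m K : ℕ} {n : ℤ} {G : MvPolynomial (Fin 2) ℚ} (h : Lat K n G)
    (hw : 0 < 12 * (11 * m) + 10 * K) : ∃ K' G', Lat K' (n + 1) G' ∧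
    12 * m + 10 * K' = 12 * (11 * m) + 10 * K ∧ ev ℚ (del ℚ ^ m * G') =
      T (12 * (11 * m) + 10 * K) (ev ℚ (del ℚ ^ (11 * m) * G)) := by
  obtain ⟨G', h1, h2⟩ := step_aux (m := m) (K' := K + 12 * m) (n := n)
    (P := del ℚ ^ (11 * m) * G) (w := 12 * (11 * m) + 10 * K) (r₀ := 9) (r₁ := 10)
    hw (hom_del_mul h.1) (by ring) (fun i hi => h.order hi)
    (((W_del_a.pow _).mul h.W_a).cast (by push_cast; ring))
    (((W_del_b.pow _).mul h.W_b).cast (by push_cast; ring)) (by norm_num) (by norm_num)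
  exact ⟨_, G', h1, by ring, h2⟩

/-- The step from `del ^ (5 + 11 m) * G` to `del ^ m * G'`. -/
lemma step_odd {m K : ℕ} {n : ℤ} {G : MvPolynomial (Fin 2) ℚ} (h : Lat K n G) :
    ∃ K' G', Lat K' (n + 1) G' ∧
    12 * m + 10 * K' = 12 * (5 + 11 * m) + 10 * K ∧ ev ℚ (del ℚ ^ m * G') =
      T (12 * (5 + 11 * m) + 10 * K) (ev ℚ (del ℚ ^ (5 + 11 * m) * G)) := by
  obtain ⟨G', h1, h2⟩ := step_aux (m := m) (K' := K + 6 + 12 * m) (n := n)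
    (P := del ℚ ^ (5 + 11 * m) * G) (w := 12 * (5 + 11 * m) + 10 * K) (r₀ := 3) (r₁ := 4)
    (by omega) (hom_del_mul h.1) (by ring) (fun i hi => h.order (by omega))
    (((W_del_a.pow _).mul h.W_a).cast (by push_cast; ring))
    (((W_del_b.pow _).mul h.W_b).cast (by push_cast; ring)) (by norm_num) (by norm_num)
  exact ⟨_, G', h1, by ring, h2⟩

/-- The first step, which starts from a pure power of `del`. -/
lemma step_first (m : ℕ) : ∃ K' G', Lat K' 0 G' ∧
    12 * m + 10 * K' = 12 * (5 + 11 * m) ∧ ev ℚ (del ℚ ^ m * G') =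
      T (12 * (5 + 11 * m)) (ev ℚ (del ℚ ^ (5 + 11 * m))) := by
  obtain ⟨G', h1, h2⟩ := step_aux (m := m) (K' := 6 + 12 * m) (n := -1) (r₀ := 6) (r₁ := 6)
    (w := 12 * (5 + 11 * m)) (P := del ℚ ^ (5 + 11 * m))
    (by omega) (mul_comm 12 (5 + 11 * m) ▸ hom_pow (hom_del (K := ℚ)) (5 + 11 * m)) (by ring)
    (fun i hi => by
      rw [← mul_one (del ℚ ^ (5 + 11 * m))]; exact coeff_ev_del_lt _ _ _ (by omega))
    ((W_del_a.pow _).cast (by push_cast; ring))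
    ((W_del_b.pow _).cast (by push_cast; ring)) (by norm_num) (by norm_num)
  exact ⟨_, G', h1, by ring, h2⟩

end
end Atkin

/-! ### The descent -/

namespace Atkin

noncomputable section

open MvPolynomial

/-- The exponents of `del` along the descent, in reverse order: `0, 0, 5, 55, 610, ...`. -/
def ex : ℕ → ℕ
  | 0 => 0
  | t + 1 => if Even t then 11 * ex t else 5 + 11 * ex t

lemma ex_two_mul (k : ℕ) : 24 * ex (2 * k) + 1 = 11 ^ (2 * k) := by
  induction k with
  | zero => rfl
  | succ k ih =>
    have h1 : ex (2 * k + 1) = 11 * ex (2 * k) := by rw [ex, if_pos (by simp)]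
    have h2 : ex (2 * k + 1 + 1) = 5 + 11 * ex (2 * k + 1) := by
      rw [ex, if_neg (by simp)]
    rw [show 2 * (k + 1) = 2 * k + 1 + 1 by ring, h2, h1, pow_succ, pow_succ, ← ih]
    ring

lemma step {t K w : ℕ} {n : ℤ} {G : MvPolynomial (Fin 2) ℚ} (h : Lat K n G)
    (hw : 12 * ex (t + 1) + 10 * K = w) (h0 : 0 < w) : ∃ K' G', Lat K' (n + 1) G' ∧
    12 * ex t + 10 * K' = w ∧
      ev ℚ (del ℚ ^ ex t * G') = T w (ev ℚ (del ℚ ^ ex (t + 1) * G)) := by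
  subst hw
  rw [ex] at h0 ⊢
  split_ifs at h0 ⊢
  · exact step_even h h0
  · exact step_odd h

/-- Each application of `T w` gains a factor `11`. -/
lemma descent (b : ℕ) : ∀ {t K w : ℕ} {n : ℤ} {G : MvPolynomial (Fin 2) ℚ}, Lat K n G →
    12 * ex (t + b) + 10 * K = w → 0 < w → ∃ K' G', Lat K' (n + b) G' ∧
      12 * ex t + 10 * K' = w ∧
      ev ℚ (del ℚ ^ ex t * G') = (T w)^[b] (ev ℚ (del ℚ ^ ex (t + b) * G)) := by
  induction b with
  | zero => intro t K w n G h hw _; exact ⟨K, G, by simpa using h, hw, rfl⟩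
  | succ b ih =>
    intro t K w n G h hw h0
    obtain ⟨K₁, G₁, h1, hw1, he1⟩ := step (t := t + b) h hw h0
    obtain ⟨K₂, G₂, h2, hw2, he2⟩ := ih h1 hw1 h0
    refine ⟨K₂, G₂, ?_, hw2, ?_⟩
    · have : n + ((b + 1 : ℕ) : ℤ) = n + 1 + b := by push_cast; ring
      rwa [this]
    · rw [he2, he1, Function.iterate_succ_apply]; rfl

lemma Lat.D_coeff {K : ℕ} {n : ℤ} {G : MvPolynomial (Fin 2) ℚ} (h : Lat K n G) :
    W 0 (12 * (n + 1)) G := by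
  refine W_of_index h.1 fun d m h0 h1 => (h.2.2 d m h0 h1).mono ?_
  have := le_max_right |d| 1
  simp only [dot, Pi.zero_apply]
  omega

lemma D_coeff_ev {r : ℤ} {P : MvPolynomial (Fin 2) ℚ} (h : W 0 r P) (i : ℕ) :
    D r (PowerSeries.coeff i (ev ℚ P)) := by
  rw [P.as_sum, map_sum, map_sum]
  refine D.sum _ fun m _ => ?_
  have h1 : monomial m (coeff m P) = coeff m P • MvPolynomial.map (Int.castRingHom ℚ) (monomial m 1) := by
    rw [map_monomial, map_one, smul_monomial, smul_eq_mul, mul_one]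
  rw [h1, map_smul, PowerSeries.coeff_smul, ev_map, PowerSeries.coeff_map, smul_eq_mul, ← add_zero r]
  refine D.mul ?_ (D_int _)
  simpa [dot] using h m

lemma W_zero_del : W 0 0 (del ℚ) := by
  intro m
  have : del ℚ = MvPolynomial.map (Int.castRingHom ℚ) (del ℤ) := by simp [del]
  rw [this, coeff_map]
  simpa [dot] using D_int _

lemma dvd_of_D {k : ℕ} {z : ℤ} (h : D (12 * k) (z : ℚ)) : (11 ^ k : ℤ) ∣ z := by
  have : ((11 ^ k : ℕ) : ℤ) ∣ z := by
    rw [padicNorm.dvd_iff_norm_le]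
    refine le_of_pow_le_pow_left₀ (n := 12) (by norm_num) (by positivity) (h.trans_eq ?_)
    rw [← zpow_natCast, ← zpow_mul]
    push_cast; congr 1; ring
  exact_mod_cast this

lemma T_map {R S : Type*} [CommRing R] [CommRing S] (f : R →+* S) (w : ℕ) (φ : PowerSeries R) :
    PowerSeries.map f (T w φ) = T w (PowerSeries.map f φ) := by
  ext n
  simp only [T, map_add, coeff_U, PowerSeries.coeff_map, PowerSeries.coeff_smul, smul_eq_mul,
    map_mul, map_pow, map_ofNat, V, PowerSeries.coeff_expand]
  split_ifs <;> simp

lemma T_iterate_map {R S : Type*} [CommRing R] [CommRing S] (f : R →+* S) (w b : ℕ)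
    (φ : PowerSeries R) :
    PowerSeries.map f ((T w)^[b] φ) = (T w)^[b] (PowerSeries.map f φ) :=
  (show Function.Semiconj (PowerSeries.map f) (T w) (T w) from T_map f w).iterate_right b φ

/-- Iterating `T w` is iterating `U`, up to a multiple of `11 ^ (w - 1)`. -/
lemma T_iterate {w : ℕ} (b : ℕ) (φ : PowerSeries ℤ) :
    ∃ ψ, (T w)^[b] φ = U^[b] φ + (11 ^ (w - 1) : ℤ) • ψ := by
  induction b with
  | zero => exact ⟨0, by simp⟩
  | succ b ih =>
    obtain ⟨ψ, h⟩ := ih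
    rw [Function.iterate_succ_apply', Function.iterate_succ_apply', h, T, map_add, map_smul]
    exact ⟨U ψ + V (U^[b] φ + (11 ^ (w - 1) : ℤ) • ψ), by rw [smul_add]; abel⟩

lemma coeff_U_iterate {R : Type*} [CommRing R] (k n : ℕ) (φ : PowerSeries R) :
    PowerSeries.coeff n (U^[k] φ) = PowerSeries.coeff (11 ^ k * n) φ := by
  induction k generalizing n with
  | zero => simp
  | succ k ih => rw [Function.iterate_succ_apply', coeff_U, ih]; congr 1; rw [pow_succ, mul_assoc]

/-- The coefficients of `(1728 Δ) ^ N`, where `24 N + 1 = 11 ^ (2 k)`, at multiples of `11 ^ k` are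
divisible by `11 ^ k`. -/
theorem del_congr {k : ℕ} (hk : 0 < k) (n : ℕ) :
    (11 ^ k : ℤ) ∣ PowerSeries.coeff (11 ^ k * n) (ev ℤ (del ℤ ^ ex (2 * k))) := by
  obtain ⟨k, rfl⟩ := Nat.exists_eq_add_one.2 hk
  set N := ex (2 * (k + 1)) with hN
  have hNe : N = 5 + 11 * ex (2 * k + 1) := by
    rw [hN, show 2 * (k + 1) = 2 * k + 1 + 1 by ring, ex, if_neg (by simp)]
  -- the weight is large enough for the `V`-part of the Hecke operator to be negligible
  have hNk : k + 1 ≤ N := by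
    have h1 := ex_two_mul (k + 1)
    have h2 : 24 * (k + 1) < 11 ^ (2 * (k + 1)) := by
      rw [pow_mul]
      clear hNe hN N h1 hk
      induction k with
      | zero => norm_num
      | succ k ih => rw [pow_succ]; omega
    omega
  -- the first step gives `Lat K₁ 0`, and the `k` further ones give `Lat K₂ k`,
  -- whose elements have coefficients divisible by `11 ^ (k + 1)`
  obtain ⟨K₁, G₁, h1, hw1, he1⟩ := step_first (ex (2 * k + 1))
  rw [← hNe] at hw1 he1
  have hs : k + 1 + k = 2 * k + 1 := by ring
  obtain ⟨K₂, G₂, h2, -, he2⟩ := descent k (t := k + 1) (w := 12 * N) h1 (by rwa [hs]) (by omega)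
  rw [hs, he1, ← Function.iterate_succ_apply] at he2
  have hW := ((W_zero_del.pow (ex (k + 1))).mul h2.D_coeff)
  have hT : (11 ^ (k + 1) : ℤ) ∣ PowerSeries.coeff n ((T (12 * N))^[k + 1] (ev ℤ (del ℤ ^ N))) := by
    apply dvd_of_D
    have h3 := D_coeff_ev hW n
    have h4 : ev ℚ (del ℚ ^ N) = PowerSeries.map (Int.castRingHom ℚ) (ev ℤ (del ℤ ^ N)) := by
      rw [← ev_map]; simp [del]
    rw [he2, h4, ← T_iterate_map, PowerSeries.coeff_map] at h3
    rw [show (ex (k + 1) : ℤ) * 0 + 12 * (0 + k + 1) = 12 * ((k + 1 : ℕ) : ℤ) by push_cast; ring] at h3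
    exact h3
  obtain ⟨ψ, hψ⟩ := T_iterate (w := 12 * N) (k + 1) (ev ℤ (del ℤ ^ N))
  rw [hψ, map_add, coeff_U_iterate, map_zsmul, smul_eq_mul] at hT
  exact (dvd_add_left ((pow_dvd_pow _ (by omega)).mul_right _)).1 hT

end
end Atkin

/-! ### The product formula for the discriminant -/

namespace Atkin

noncomputable section

open ModularForm Filter Topology

/-- The Taylor series of a function at the origin. -/
def tay (f : ℂ → ℂ) : PowerSeries ℂ :=
  PowerSeries.mk fun n => (n.factorial : ℂ)⁻¹ * iteratedDeriv n f 0

lemma tay_mul {f g : ℂ → ℂ} (hf : AnalyticAt ℂ f 0) (hg : AnalyticAt ℂ g 0) :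
    tay (f * g) = tay f * tay g := by
  ext
  simp only [tay, PowerSeries.coeff_mk, iteratedDeriv_mul hf.contDiffAt hg.contDiffAt,
    Finset.mul_sum, PowerSeries.coeff_mul,
    Finset.Nat.sum_antidiagonal_eq_sum_range_succ_mk, Nat.succ_eq_add_one]
  refine Finset.sum_congr rfl fun i hi ↦ ?_
  rw [Nat.cast_choose _ (by grind)]
  field_simp [Nat.factorial_ne_zero]

lemma tay_congr {f g : ℂ → ℂ} (h : f =ᶠ[𝓝 0] g) : tay f = tay g := by
  ext n
  simp only [tay, PowerSeries.coeff_mk, h.iteratedDeriv_eq n]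

lemma iteratedDeriv_poly (p : Polynomial ℂ) (n : ℕ) :
    iteratedDeriv n (fun x => p.eval x) = fun x => (Polynomial.derivative^[n] p).eval x := by
  induction n with
  | zero => simp
  | succ n ih =>
    rw [iteratedDeriv_succ, ih, Function.iterate_succ_apply']
    ext x
    exact Polynomial.deriv _

lemma tay_poly (p : Polynomial ℂ) : tay (fun x => p.eval x) = p := by
  ext n
  rw [tay, PowerSeries.coeff_mk, iteratedDeriv_poly]
  beta_reduce
  rw [← Polynomial.coeff_zero_eq_eval_zero,
    Polynomial.coeff_iterate_derivative, Nat.zero_add, Nat.descFactorial_self, nsmul_eq_mul,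
    Polynomial.coeff_coe, inv_mul_cancel_left₀ (by exact_mod_cast n.factorial_ne_zero)]

lemma tay_pow {f : ℂ → ℂ} (hf : AnalyticAt ℂ f 0) (n : ℕ) : tay (f ^ n) = tay f ^ n := by
  induction n with
  | zero =>
    rw [pow_zero, pow_zero]
    have := tay_poly 1
    simp only [Polynomial.eval_one, Polynomial.coe_one] at this
    exact this
  | succ n ih => rw [pow_succ, pow_succ, tay_mul (hf.pow n) hf, ih]

/-- The Taylor series of the Euler product is the formal one, by locally uniform convergence of the
partial products and of all their derivatives. -/
lemma tay_prod : tay (fun q => ∏' n : ℕ, (1 - q ^ (n + 1))) = PowerSeries.pentagonalSeries ℂ := by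
  set p : Finset ℕ → Polynomial ℂ := fun s => ∏ n ∈ s, (1 - Polynomial.X ^ (n + 1))
  have h0 : TendstoLocallyUniformlyOn (fun s q => (p s).eval q)
      (fun q : ℂ => ∏' n : ℕ, (1 - q ^ (n + 1))) atTop (Metric.ball 0 1) := by
    have := multipliableLocallyUniformlyOn_one_sub_pow.hasProdLocallyUniformlyOn
    rw [hasProdLocallyUniformlyOn_iff_tendstoLocallyUniformlyOn] at this
    convert this using 3 with s q
    simp [p, Polynomial.eval_prod]
  have h1 : ∀ n, TendstoLocallyUniformlyOn
      (fun s => iteratedDeriv n fun q => (p s).eval q)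
      (iteratedDeriv n fun q : ℂ => ∏' n : ℕ, (1 - q ^ (n + 1))) atTop (Metric.ball 0 1) := by
    intro n
    induction n with
    | zero => simpa using h0
    | succ n ih =>
      simp only [iteratedDeriv_succ]
      refine ih.deriv (.of_forall fun s => ?_) Metric.isOpen_ball
      rw [iteratedDeriv_poly]
      exact (Polynomial.differentiable _).differentiableOn
  ext n
  have h2 := ((h1 n).tendsto_at (Metric.mem_ball_self one_pos)).const_mul ((n.factorial : ℂ)⁻¹)
  have h3 : ∀ s, (n.factorial : ℂ)⁻¹ * iteratedDeriv n (fun q => (p s).eval q) 0 =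
      (∏ n ∈ s, (1 - PowerSeries.X ^ (n + 1) : PowerSeries ℂ)).coeff n := by
    intro s
    have := congrArg (PowerSeries.coeff n) (tay_poly (p s))
    rw [tay, PowerSeries.coeff_mk] at this
    rw [this]
    congr 1
    change Polynomial.coeToPowerSeries.ringHom (p s) = _
    simp [p, map_prod]
  simp only [h3] at h2
  rw [tay, PowerSeries.coeff_mk]
  exact tendsto_nhds_unique h2 (tendsto_nhds_of_eventually_eq
    (PowerSeries.coeff_prod_one_sub_X_pow_eventually_eq ℂ n))

/-- The product formula `Δ = q ∏ (1 - qⁿ)²⁴`, as an identity of formal power series. Convergence of the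
product for complex `q` is turned into an identity of Taylor series. -/
lemma qExp_disc_eq : UpperHalfPlane.qExpansion 1 ModularForm.discriminant =
    PowerSeries.X * PowerSeries.pentagonalSeries ℂ ^ 24 := by
  have hP : AnalyticAt ℂ (fun q : ℂ => ∏' n : ℕ, (1 - q ^ (n + 1))) 0 :=
    differentiableOn_tprod_one_sub_pow.analyticAt (Metric.ball_mem_nhds _ one_pos)
  have h1 : UpperHalfPlane.qExpansion 1 ModularForm.discriminant =
      tay (UpperHalfPlane.cuspFunction 1 ModularForm.discriminant) := by
    ext n
    rw [UpperHalfPlane.qExpansion_coeff, tay, PowerSeries.coeff_mk]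
  have h2 : UpperHalfPlane.cuspFunction 1 ModularForm.discriminant =ᶠ[𝓝 0]
      (fun q => Polynomial.X.eval q) * (fun q : ℂ => ∏' n : ℕ, (1 - q ^ (n + 1))) ^ 24 := by
    filter_upwards [Metric.ball_mem_nhds (0 : ℂ) one_pos] with q hq
    rw [discriminant_cuspFunction_eqOn hq]
    beta_reduce
    rw [(multipliable_one_sub_pow (by simpa using hq)).tprod_pow 24]
    simp
  rw [h1, tay_congr h2, tay_mul _ (hP.pow 24), tay_pow hP, tay_prod, tay_poly, Polynomial.coe_X]
  simp only [Polynomial.eval_X]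
  exact analyticAt_id

end
end Atkin

/-! ### From the discriminant to partitions -/

namespace Atkin

noncomputable section

open PowerSeries

/-- The Euler product `∏ (1 - qⁿ)`, as a power series: it is the sum of the pentagonal number theorem. -/
abbrev eul (R : Type*) [CommRing R] : PowerSeries R := pentagonalSeries R

/-- The generating function of the partition numbers. -/
def pgf : PowerSeries ℤ := PowerSeries.mk fun n => (partitionCount n : ℤ)

open PowerSeries.WithPiTopology in
lemma pgf_mul_eul : pgf * eul ℤ = 1 := by
  have h1 := Nat.Partition.hasProd_powerSeriesMk_card_restricted ℤ (fun _ => True)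
  have h2 := h1.mul (hasProd_one_sub_X_pow ℤ)
  have h3 : (fun i : ℕ => (if True then ∑' j : ℕ, (X : PowerSeries ℤ) ^ ((i + 1) * j) else 1) *
      (1 - X ^ (i + 1))) = fun _ => 1 := by
    ext1 i
    rw [if_pos trivial]
    simp_rw [pow_mul]
    exact tsum_pow_mul_one_sub_of_constantCoeff_eq_zero (by simp)
  rw [h3] at h2
  rw [← h2.unique hasProd_one]
  congr 1
  ext n
  rw [pgf, coeff_mk, coeff_mk, partitionCount]
  simp [Nat.Partition.restricted]

lemma eul_map {R S : Type*} [CommRing R] [CommRing S] (f : R →+* S) :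
    PowerSeries.map f (eul R) = eul S := by
  ext n
  rw [coeff_map]
  by_cases h : n ∈ Set.range pentagonal
  · obtain ⟨k, rfl⟩ := h
    rw [coeff_pentagonalSeries_pentagonal, coeff_pentagonalSeries_pentagonal, map_intCast]
  · rw [coeff_pentagonalSeries_eq_zero _ h, coeff_pentagonalSeries_eq_zero _ h, map_zero]

lemma constantCoeff_eul : constantCoeff (eul ℤ) = 1 := by
  rw [← coeff_zero_eq_constantCoeff_apply]
  exact (coeff_pentagonalSeries_pentagonal ℤ 0).trans (by simp)

lemma ev_del_eq : ev ℤ (del ℤ) = (1728 : ℤ) • (X * eul ℤ ^ 24) := by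
  obtain ⟨u, hu, hd, -⟩ := qExp_disc
  have h1 : X * u = X * eul ℚ ^ 24 := by
    apply PowerSeries.map_injective (algebraMap ℚ ℂ) (algebraMap ℚ ℂ).injective
    have h2 : toC (X * u) = X * eul ℂ ^ 24 := by rw [← hu]; exact qExp_disc_eq
    rw [map_mul _ X (eul ℚ ^ 24), map_pow, map_X, eul_map, ← h2]
  rw [h1] at hd
  have h3 : ev ℚ (del ℚ) = (1728 : ℚ) • (X * eul ℚ ^ 24) := by
    rw [hd, smul_smul, mul_inv_cancel₀ (by norm_num), one_smul]
  apply PowerSeries.map_injective (Int.castRingHom ℚ) (RingHom.injective_int _)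
  have h4 : ev ℚ (del ℚ) = PowerSeries.map (Int.castRingHom ℚ) (ev ℤ (del ℤ)) := by
    rw [← ev_map]; simp [del]
  rw [← h4, h3, map_zsmul, map_mul, map_pow, map_X, eul_map, ← Int.cast_smul_eq_zsmul ℚ]
  norm_num

lemma dvd_coeff {R : Type*} [CommRing R] {a : R} {φ : PowerSeries R} (h : C a ∣ φ) (n : ℕ) :
    a ∣ coeff n φ := by
  obtain ⟨ψ, rfl⟩ := h
  exact ⟨_, coeff_C_mul n ψ a⟩

lemma C_dvd {R : Type*} [CommRing R] {a : R} {φ : PowerSeries R} (h : ∀ n, a ∣ coeff n φ) :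
    C a ∣ φ := by
  choose c hc using h
  exact ⟨PowerSeries.mk c, by ext n; rw [coeff_C_mul, coeff_mk, hc]⟩

lemma frobenius_congr (f : PowerSeries ℤ) (b : ℕ) :
    (11 : PowerSeries ℤ) ∣ f ^ 11 ^ b - expand (11 ^ b) (by positivity) f := by
  have h : PowerSeries.map (Int.castRingHom (ZMod 11))
      (f ^ 11 ^ b - expand (11 ^ b) (by positivity) f) = 0 := by
    rw [map_sub, map_pow, PowerSeries.map_expand, sub_eq_zero]
    generalize PowerSeries.map (Int.castRingHom (ZMod 11)) f = g
    have := MvPowerSeries.map_iterateFrobenius_expand 11 (by norm_num) g b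
    refine this.symm.trans ?_
    have h1 : iterateFrobenius (ZMod 11) 11 b = RingHom.id _ := by
      ext x
      rw [iterateFrobenius_def, ZMod.pow_card_pow, RingHom.id_apply]
    rw [h1, MvPowerSeries.map_id]
    rfl
  refine C_dvd (a := (11 : ℤ)) fun n => ?_
  have := congrArg (coeff n) h
  rw [coeff_map, map_zero, eq_intCast] at this
  exact (ZMod.intCast_zmod_eq_zero_iff_dvd _ 11).1 this

/-- `f ^ (11 ^ (2 k)) ≡ g(q ^ (11 ^ k))` modulo `11 ^ k`, with `g = f ^ (11 ^ k)`: raise the Frobenius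
congruence modulo `11` to the power `11 ^ k`. -/
lemma pow_congr (f : PowerSeries ℤ) (k : ℕ) :
    C (11 ^ k : ℤ) ∣ f ^ 11 ^ (2 * k) - expand (11 ^ k) (by positivity) (f ^ 11 ^ k) := by
  have := dvd_sub_pow_of_dvd_sub (p := 11) (by exact_mod_cast frobenius_congr f k) k
  rw [← pow_mul, ← pow_add, ← two_mul, ← map_pow] at this
  refine dvd_trans ?_ this
  rw [map_pow]
  exact pow_dvd_pow _ (Nat.le_succ k)

/-- A factor in `q ^ r` can be taken out when selecting the coefficients at multiples of `r`. -/
lemma coeff_mul_expand {R : Type*} [CommRing R] (r : ℕ) (hq : r ≠ 0) (φ ψ : PowerSeries R) (n : ℕ) :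
    coeff (r * n) (φ * expand r hq ψ) =
      coeff n (PowerSeries.mk (fun i => coeff (r * i) φ) * ψ) := by
  rw [coeff_mul, coeff_mul]
  symm
  refine Finset.sum_of_injOn (fun p => (r * p.1, r * p.2)) ?_ ?_ ?_ ?_
  · rintro ⟨a, b⟩ _ ⟨c, d⟩ _ h
    simpa [hq] using h
  · rintro ⟨a, b⟩ h
    simp only [Finset.mem_coe, Finset.HasAntidiagonal.mem_antidiagonal] at h ⊢
    rw [← h, mul_add]
  · rintro ⟨a, b⟩ h h'
    rw [Finset.HasAntidiagonal.mem_antidiagonal] at h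
    simp only at h ⊢
    rw [coeff_expand, if_neg, mul_zero]
    rintro ⟨d, rfl⟩
    obtain ⟨c, rfl⟩ : r ∣ a := (Nat.dvd_add_left ⟨d, rfl⟩).1 (h ▸ dvd_mul_right r n)
    rw [← mul_add] at h
    exact h' ⟨(c, d), by simpa [hq] using h, rfl⟩
  · rintro ⟨a, b⟩ _
    simp

/-- The congruence for `p(n)`: by `del_congr` the coefficients of
`q ^ N (∑ p(n) qⁿ) (∏ (1 - qⁿ)) ^ (11 ^ (2 k))` at multiples of `11 ^ k` are divisible by `11 ^ k`, and
modulo `11 ^ k` the last factor is a unit power series in `q ^ (11 ^ k)`. -/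
lemma partition_congr {k n : ℕ} (hk : 0 < k) (h : 24 * n ≡ 1 [MOD 11 ^ k]) :
    (11 ^ k : ℤ) ∣ partitionCount n := by
  set N := ex (2 * k) with hN
  have hN1 : 24 * N + 1 = 11 ^ (2 * k) := ex_two_mul k
  obtain ⟨m, hm⟩ : 11 ^ k ∣ n + N := by
    have h1 : 24 * n + 24 * N ≡ 1 + 24 * N [MOD 11 ^ k] := h.add_right _
    rw [add_comm 1, hN1, ← mul_add] at h1
    have h2 : 11 ^ k ∣ 11 ^ (2 * k) := pow_dvd_pow _ (by omega)
    exact (Nat.Coprime.pow_left k (by norm_num)).dvd_of_dvd_mul_left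
      ((Nat.modEq_zero_iff_dvd).1 (h1.trans ((Nat.modEq_zero_iff_dvd).2 h2)))
  have hq : 11 ^ k ≠ 0 := by positivity
  set φ : PowerSeries ℤ := X ^ N * pgf with hφ
  have hD : ev ℤ (del ℤ ^ N) = (1728 ^ N : ℤ) • (φ * eul ℤ ^ 11 ^ (2 * k)) := by
    rw [map_pow, ev_del_eq, smul_pow, mul_pow, hφ, ← hN1, pow_succ _ (24 * N), ← pow_mul]
    congr 1
    linear_combination (-(X ^ N * eul ℤ ^ (24 * N))) * pgf_mul_eul
  have hA : C (11 ^ k : ℤ) ∣ PowerSeries.mk (fun i => coeff (11 ^ k * i) φ) * eul ℤ ^ 11 ^ k := by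
    refine C_dvd fun i => ?_
    rw [← coeff_mul_expand _ hq]
    have h1 := del_congr hk i
    rw [← hN, hD, map_zsmul, smul_eq_mul] at h1
    have h2 := (IsCoprime.pow (by norm_num : IsCoprime (11 : ℤ) 1728)).dvd_of_dvd_mul_left h1
    have h3 := dvd_coeff ((pow_congr (eul ℤ) k).mul_left φ) (11 ^ k * i)
    rw [mul_sub, map_sub] at h3
    exact (dvd_sub_right h2).1 h3
  have hu : IsUnit (eul ℤ ^ 11 ^ k) :=
    (PowerSeries.isUnit_iff_constantCoeff.2 (by rw [constantCoeff_eul]; exact isUnit_one)).pow _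
  have := dvd_coeff (hu.dvd_mul_right.1 hA) m
  rw [coeff_mk, ← hm, hφ, add_comm, coeff_X_pow_mul', if_pos (by omega)] at this
  simpa [pgf] using this

end
end Atkin

theorem atkin_pow_11 (k : ℕ) (hk : 0 < k) (n : ℕ)
    (h : 24 * n ≡ 1 [MOD 11 ^ k]) : partitionCount n ≡ 0 [MOD 11 ^ k] := by
  rw [Nat.modEq_zero_iff_dvd]
  exact_mod_cast Atkin.partition_congr hk h
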